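/- arXiv:1701.00787 — 2 statements merged into one kernel-verified Lean document; each statement's English description precedes it below -/
import Mathlib

section
/- (Pólya criterion, strict positive definiteness) Let d ∈ ℕ with d ≥ 3 and set λ = ⌈(d-2)/2⌉. Let g: [0,π] → ℝ be λ-times continuously differentiable and suppose that: (i) (-1)^λ g^{(λ)} is convex on [0,π]; (ii) g^{(j)}(π) = 0 for all 0 ≤ j ≤ λ, the left derivative of g^{(λ)} at π equals 0, and the right derivative of g^{(λ)} at 0 exists and is finite; (iii) g^{(λ)} is not an affine function on [0,π]. Then g is a strictly positive definite function on the unit sphere S^{d-1}. -/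
open MeasureTheory Real Set
open scoped RealInnerProductSpace

/-- A continuous function `g : [0,π] → ℝ` is positive definite on the unit sphere
`S^{d-1} ⊂ ℝ^d` if for every `N` and every family of `N` distinct points on the sphere,
the matrix `[g(arccos ⟨x_i, x_j⟩)]` is positive semidefinite. -/
def PosDefOnSphere (d : ℕ) (g : ℝ → ℝ) : Prop :=
  ∀ (N : ℕ) (x : Fin N → EuclideanSpace ℝ (Fin d)),
    (∀ i, ‖x i‖ = 1) → Function.Injective x →
    (Matrix.of fun i j : Fin N => g (Real.arccos ⟪x i, x j⟫)).PosSemidef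

/-- A continuous function `g : [0,π] → ℝ` is strictly positive definite on the unit sphere
`S^{d-1} ⊂ ℝ^d` if for every `N` and every family of `N` distinct points on the sphere,
the matrix `[g(arccos ⟨x_i, x_j⟩)]` is positive definite. -/
def StrictPosDefOnSphere (d : ℕ) (g : ℝ → ℝ) : Prop :=
  ∀ (N : ℕ) (x : Fin N → EuclideanSpace ℝ (Fin d)),
    (∀ i, ‖x i‖ = 1) → Function.Injective x →
    (Matrix.of fun i j : Fin N => g (Real.arccos ⟪x i, x j⟫)).PosDef

/-!
Integrating by parts against the one-sided derivative of the convex function `(-1)^λ g^(λ)` writes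
`g` as a mixture, over a nonzero measure in `x ∈ (0, π]`, of the truncated powers
`θ ↦ max (x - θ) 0 ^ (λ + 1)`. It therefore suffices that each of these is strictly positive
definite in dimension `2 * λ + 2 ≥ d`.

In that dimension the Gegenbauer kernels `C_n^λ(⟪x, y⟫)` are positive semidefinite, being, up to a
positive factor, the Gram matrices of zonal harmonics for the Fischer form; since they span all
polynomials in `⟪x, y⟫`, a Gegenbauer series with strictly positive coefficients is strictly
positive definite. The Gegenbauer series of a truncated power comes from its cosine series by `λ`
summations by parts. Its coefficients, as functions of the truncation point `x`, satisfy linear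
differential equations, and Duhamel's principle writes them as iterated convolutions of the
nonnegative functions `(1 - cos (n * x)) / n ^ 2`, which makes them positive.
-/

section Gegenbauer

variable {A B : Type*} [CommRing A] [Algebra ℝ A] [CommRing B] [Algebra ℝ B]

/-- The Gegenbauer polynomial `C_n^α`, homogenised: for `r, t` in an `ℝ`-algebra this is
`r^{n/2} C_n^α(t / √r)`, and `r = 1` gives `C_n^α(t)` itself. -/
noncomputable def gegenbauer (α : ℝ) (r t : A) : ℕ → A
  | 0 => 1
  | 1 => (2 * α) • t
  | n + 2 => ((n : ℝ) + 2)⁻¹ • ((2 * (n + 1 + α)) • (t * gegenbauer α r t (n + 1)) -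
      (n + 2 * α) • (r * gegenbauer α r t n))

lemma gegenbauer_recurrence (α : ℝ) (r t : A) (n : ℕ) :
    ((n : ℝ) + 2) • gegenbauer α r t (n + 2) =
      (2 * (n + 1 + α)) • (t * gegenbauer α r t (n + 1)) -
        (n + 2 * α) • (r * gegenbauer α r t n) := by
  rw [gegenbauer, smul_inv_smul₀ (by positivity)]

lemma map_gegenbauer (φ : A →ₐ[ℝ] B) (α : ℝ) (r t : A) (n : ℕ) :
    φ (gegenbauer α r t n) = gegenbauer α (φ r) (φ t) n := by
  induction n using Nat.twoStepInduction with
  | zero => simp [gegenbauer]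
  | one => simp [gegenbauer]
  | more n ih₀ ih₁ => simp [gegenbauer, ih₀, ih₁]

lemma gegenbauer_eq_shift (α t : ℝ) (n : ℕ) :
    gegenbauer α 1 t (n + 2) = gegenbauer (α + 1) 1 t (n + 2) -
      2 * t * gegenbauer (α + 1) 1 t (n + 1) + gegenbauer (α + 1) 1 t n := by
  induction n using Nat.twoStepInduction with
  | zero => simp [gegenbauer]; ring
  | one => simp [gegenbauer]; ring
  | more n ih₀ ih₁ =>
    have rec₀ := gegenbauer_recurrence (α + 1) (1 : ℝ) t n
    have rec₁ := gegenbauer_recurrence (α + 1) (1 : ℝ) t (n + 1)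
    have rec₂ := gegenbauer_recurrence (α + 1) (1 : ℝ) t (n + 2)
    have rec' := gegenbauer_recurrence α (1 : ℝ) t (n + 2)
    simp only [smul_eq_mul, one_mul, Nat.cast_add, Nat.cast_one, Nat.cast_ofNat] at *
    refine mul_left_cancel₀ (by positivity : (n : ℝ) + 2 + 2 ≠ 0) ?_
    linear_combination rec' - rec₂ + 2 * t * rec₁ - rec₀ + 2 * (n + 3 + α) * t * ih₁ -
      (n + 2 + 2 * α) * ih₀

lemma gegenbauer_eq_sub_shift (α t : ℝ) (n : ℕ) :
    (n + 2 + α) * gegenbauer α 1 t (n + 2) =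
      α * (gegenbauer (α + 1) 1 t (n + 2) - gegenbauer (α + 1) 1 t n) := by
  have recurrence := gegenbauer_recurrence (α + 1) (1 : ℝ) t n
  simp only [smul_eq_mul, one_mul] at recurrence
  rw [gegenbauer_eq_shift]
  linear_combination recurrence

open Polynomial in
lemma gegenbauer_one_eq_U (t : ℝ) (n : ℕ) :
    gegenbauer 1 1 t n = (Chebyshev.U ℝ n).eval t := by
  induction n using Nat.twoStepInduction with
  | zero => simp [gegenbauer]
  | one => simp [gegenbauer]
  | more n ih₀ ih₁ =>
    have recurrence := gegenbauer_recurrence 1 (1 : ℝ) t n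
    rw [ih₀, ih₁] at recurrence
    simp only [smul_eq_mul, one_mul, Nat.cast_add, Nat.cast_one, Nat.cast_ofNat] at recurrence ⊢
    refine mul_left_cancel₀ (by positivity : (n : ℝ) + 2 ≠ 0) ?_
    simp only [Chebyshev.U_add_two, eval_sub, eval_mul, eval_ofNat, eval_X]
    linear_combination recurrence

open Polynomial in
lemma gegenbauer_one_cos_sub (θ : ℝ) (n : ℕ) :
    gegenbauer 1 1 (cos θ) (n + 2) - gegenbauer 1 1 (cos θ) n = 2 * cos ((n + 2) * θ) := by
  have two_mul_T := congr_arg (eval (cos θ)) (Chebyshev.two_mul_T_eq_U_sub_U ℝ n)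
  rw [eval_mul, eval_sub, Chebyshev.T_real_cos] at two_mul_T
  simpa [gegenbauer_one_eq_U] using two_mul_T.symm

open Polynomial Submodule in
lemma span_gegenbauer_eq_top {α : ℝ} (hα : 0 < α) :
    span ℝ (range (gegenbauer α 1 (X : ℝ[X]))) = ⊤ := by
  set S := span ℝ (range (gegenbauer α 1 (X : ℝ[X])))
  have gegenbauer_mem (n : ℕ) : gegenbauer α 1 X n ∈ S := subset_span (mem_range_self n)
  have X_mul_gegenbauer_mem (n : ℕ) : X * gegenbauer α 1 X n ∈ S := by
    rcases n with _ | n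
    · simpa only [gegenbauer, mul_one, S.smul_mem_iff (mul_pos two_pos hα).ne']
        using gegenbauer_mem 1
    · rw [← S.smul_mem_iff (by positivity : 2 * (n + 1 + α) ≠ 0),
        eq_add_of_sub_eq (gegenbauer_recurrence α (1 : ℝ[X]) X n).symm, one_mul]
      exact S.add_mem (S.smul_mem _ (gegenbauer_mem _)) (S.smul_mem _ (gegenbauer_mem _))
  have X_mul_mem : S ≤ S.comap (LinearMap.mulLeft ℝ X) :=
    span_le.mpr (range_subset_iff.mpr X_mul_gegenbauer_mem)
  have X_pow_mem (m : ℕ) : (X : ℝ[X]) ^ m ∈ S := by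
    induction m with
    | zero => exact gegenbauer_mem 0
    | succ m ih => exact pow_succ' (X : ℝ[X]) m ▸ X_mul_mem ih
  refine eq_top_iff'.mpr fun p ↦ ?_
  rw [p.as_sum_range_C_mul_X_pow]
  exact S.sum_mem fun m _ ↦ smul_eq_C_mul (p.coeff m) ▸ S.smul_mem _ (X_pow_mem m)

end Gegenbauer

section Fischer

open MvPolynomial Matrix
open scoped Nat

variable {σ : Type*} [Fintype σ]

/-- The Fischer form on real polynomials: the monomials are orthogonal, and `⟪X^a, X^a⟫ = a!`. -/
noncomputable def fischer : MvPolynomial σ ℝ →ₗ[ℝ] MvPolynomial σ ℝ →ₗ[ℝ] ℝ :=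
  (basisMonomials σ ℝ).constr ℝ fun a ↦ (∏ i, ((a i)! : ℝ)) • lcoeff ℝ a

lemma fischer_monomial (a : σ →₀ ℕ) (c : ℝ) (q : MvPolynomial σ ℝ) :
    fischer (monomial a c) q = c * ((∏ i, ((a i)! : ℝ)) * coeff a q) := by
  have monomial_eq : monomial a c = c • basisMonomials σ ℝ a := by simp [smul_monomial]
  rw [monomial_eq, map_smul, fischer, Module.Basis.constr_basis]
  rfl

lemma fischer_self_nonneg (q : MvPolynomial σ ℝ) : 0 ≤ fischer q q := by
  conv_rhs => enter [1]; rw [q.as_sum, map_sum]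
  simp only [LinearMap.sum_apply, fischer_monomial, mul_left_comm (coeff _ q)]
  exact Finset.sum_nonneg fun a _ ↦
    mul_nonneg (Finset.prod_nonneg fun _ _ ↦ by positivity) (mul_self_nonneg _)

lemma prod_factorial_add_single (a : σ →₀ ℕ) (i : σ) :
    ∏ k, (((a + Finsupp.single i 1 : σ →₀ ℕ) k)! : ℝ) = (a i + 1) * ∏ k, ((a k)! : ℝ) := by
  classical
  have off_i : ∏ k ∈ {i}ᶜ, (((a + Finsupp.single i 1 : σ →₀ ℕ) k)! : ℝ) =
      ∏ k ∈ {i}ᶜ, ((a k)! : ℝ) :=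
    Finset.prod_congr rfl fun k hk ↦ by
      simp [Finsupp.single_eq_of_ne (by simpa using hk : k ≠ i)]
  rw [Fintype.prod_eq_mul_prod_compl i, off_i, Fintype.prod_eq_mul_prod_compl i, ← mul_assoc]
  simp [Nat.factorial_succ]

lemma fischer_X_mul (i : σ) (p q : MvPolynomial σ ℝ) :
    fischer (X i * p) q = fischer p (pderiv i q) := by
  induction p using MvPolynomial.induction_on' with
  | monomial a c =>
    rw [mul_comm, X, monomial_mul, mul_one, fischer_monomial, fischer_monomial,
      prod_factorial_add_single, coeff_pderiv]
    ring
  | add p₁ p₂ h₁ h₂ => simp only [mul_add, map_add, LinearMap.add_apply, h₁, h₂]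

/-- The Laplacian `∑ ∂²/∂X_i²` on polynomials. -/
noncomputable def polyLaplacian : MvPolynomial σ ℝ →ₗ[ℝ] MvPolynomial σ ℝ :=
  ∑ i, (pderiv i).toLinearMap ∘ₗ (pderiv i).toLinearMap

/-- The directional derivative `∑ x_i ∂/∂X_i` on polynomials. -/
noncomputable def dirDeriv (x : σ → ℝ) : Derivation ℝ (MvPolynomial σ ℝ) (MvPolynomial σ ℝ) :=
  ∑ i, x i • pderiv i

/-- The squared Euclidean norm `∑ X_i²`, as a polynomial. -/
noncomputable def normSqPoly : MvPolynomial σ ℝ := ∑ i, X i ^ 2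

/-- The linear form `∑ x_i X_i`, as a polynomial. -/
noncomputable def linearForm (x : σ → ℝ) : MvPolynomial σ ℝ := ∑ i, x i • X i

lemma polyLaplacian_apply (p : MvPolynomial σ ℝ) :
    polyLaplacian p = ∑ i, pderiv i (pderiv i p) := by
  simp [polyLaplacian]

lemma dirDeriv_apply (x : σ → ℝ) (p : MvPolynomial σ ℝ) :
    dirDeriv x p = ∑ i, x i • pderiv i p := by
  have coe_sum := map_sum (Derivation.coeFnAddMonoidHom (R := ℝ)) (fun i ↦ x i • pderiv i)
    (Finset.univ : Finset σ)
  exact (congr_fun coe_sum p).trans (by simp)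

lemma dirDeriv_X (x : σ → ℝ) (i : σ) : dirDeriv x (X i) = C (x i) := by
  classical
  simp [dirDeriv_apply, pderiv_X, Pi.single_apply, smul_eq_C_mul]

lemma isHomogeneous_normSqPoly : (normSqPoly : MvPolynomial σ ℝ).IsHomogeneous 2 :=
  .sum _ _ _ fun i _ ↦ isHomogeneous_X_pow i 2

lemma isHomogeneous_linearForm (x : σ → ℝ) : (linearForm x).IsHomogeneous 1 :=
  .sum _ _ _ fun i _ ↦ (homogeneousSubmodule σ ℝ 1).smul_mem _ (isHomogeneous_X ℝ i)

lemma isHomogeneous_dirDeriv (x : σ → ℝ) {n : ℕ} {p : MvPolynomial σ ℝ}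
    (hp : p.IsHomogeneous (n + 1)) : (dirDeriv x p).IsHomogeneous n := by
  rw [dirDeriv_apply]
  exact .sum _ _ _ fun i _ ↦ (homogeneousSubmodule σ ℝ n).smul_mem _ hp.pderiv

lemma dirDeriv_linearForm (x y : σ → ℝ) : dirDeriv x (linearForm y) = C (x ⬝ᵥ y) := by
  simp [linearForm, dirDeriv_X, dotProduct, mul_comm, smul_eq_C_mul]

lemma pderiv_linearForm (i : σ) (x : σ → ℝ) : pderiv i (linearForm x) = C (x i) := by
  classical
  simp [linearForm, pderiv_X, Pi.single_apply, smul_eq_C_mul]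

lemma dirDeriv_normSqPoly (x : σ → ℝ) : dirDeriv x normSqPoly = 2 * linearForm x := by
  simp only [normSqPoly, linearForm, map_sum, Derivation.leibniz_pow, dirDeriv_X,
    Finset.mul_sum, smul_eq_C_mul, pow_one, Nat.add_one_sub_one, nsmul_eq_mul, smul_eq_mul,
    Nat.cast_ofNat]
  exact Finset.sum_congr rfl fun i _ ↦ by ring

lemma pderiv_normSqPoly (i : σ) : pderiv i (normSqPoly : MvPolynomial σ ℝ) = 2 * X i := by
  classical
  simp [normSqPoly, pderiv_X, Pi.single_apply, Derivation.leibniz_pow]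

lemma fischer_linearForm_mul (x : σ → ℝ) (p q : MvPolynomial σ ℝ) :
    fischer (linearForm x * p) q = fischer p (dirDeriv x q) := by
  simp only [linearForm, dirDeriv_apply, Finset.sum_mul, map_sum, LinearMap.sum_apply,
    smul_mul_assoc, map_smul, LinearMap.smul_apply, fischer_X_mul]

lemma fischer_normSqPoly_mul (p q : MvPolynomial σ ℝ) :
    fischer (normSqPoly * p) q = fischer p (polyLaplacian q) := by
  simp only [normSqPoly, polyLaplacian_apply, Finset.sum_mul, map_sum, LinearMap.sum_apply, sq,
    mul_assoc, fischer_X_mul]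

lemma polyLaplacian_mul (p q : MvPolynomial σ ℝ) :
    polyLaplacian (p * q) = p * polyLaplacian q + 2 * ∑ i, pderiv i p * pderiv i q +
      polyLaplacian p * q := by
  simp only [polyLaplacian_apply, Finset.mul_sum, Finset.sum_mul, ← Finset.sum_add_distrib]
  refine Finset.sum_congr rfl fun i _ ↦ ?_
  simp only [pderiv_mul, map_add]
  ring

lemma polyLaplacian_linearForm_mul (x : σ → ℝ) (p : MvPolynomial σ ℝ) :
    polyLaplacian (linearForm x * p) = linearForm x * polyLaplacian p + 2 * dirDeriv x p := by
  simp [polyLaplacian_mul, dirDeriv_apply, pderiv_linearForm, polyLaplacian_apply (linearForm x),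
    smul_eq_C_mul]

lemma polyLaplacian_normSqPoly_mul {n : ℕ} {p : MvPolynomial σ ℝ} (hp : p.IsHomogeneous n) :
    polyLaplacian (normSqPoly * p) =
      normSqPoly * polyLaplacian p + (2 * Fintype.card σ + 4 * n : ℝ) • p := by
  have euler := hp.sum_X_mul_pderiv
  rw [nsmul_eq_mul] at euler
  simp only [polyLaplacian_mul, pderiv_normSqPoly, polyLaplacian_apply normSqPoly, mul_assoc,
    ← Finset.mul_sum, euler]
  simp [smul_eq_C_mul, show (2 : MvPolynomial σ ℝ) = C 2 from rfl, show (4 : ℝ) = 2 * 2 by norm_num]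
  ring

lemma polyLaplacian_dirDeriv (x : σ → ℝ) (p : MvPolynomial σ ℝ) :
    polyLaplacian (dirDeriv x p) = dirDeriv x (polyLaplacian p) := by
  have pderiv_dirDeriv (i : σ) (p : MvPolynomial σ ℝ) :
      pderiv i (dirDeriv x p) = dirDeriv x (pderiv i p) := by
    classical
    have commutator_eq_zero : ⁅pderiv i, dirDeriv x⁆ = 0 := derivation_ext fun k ↦ by
      rw [Derivation.commutator_apply, dirDeriv_X]
      simp [pderiv_X, Pi.single_apply, apply_ite]
    exact sub_eq_zero.mp (Derivation.congr_fun commutator_eq_zero p)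
  simp only [polyLaplacian_apply, map_sum, pderiv_dirDeriv]

/-- The solid zonal polynomial with pole `x`: the homogeneous polynomial of degree `n` whose value
at a point `y` of the unit sphere is `C_n^α(⟪x, y⟫)` when `x` is a unit vector. -/
noncomputable def zonal (α : ℝ) (x : σ → ℝ) (n : ℕ) : MvPolynomial σ ℝ :=
  gegenbauer α normSqPoly (linearForm x) n

lemma zonal_zero (α : ℝ) (x : σ → ℝ) : zonal α x 0 = 1 := rfl

lemma zonal_one (α : ℝ) (x : σ → ℝ) : zonal α x 1 = (2 * α) • linearForm x := rfl

lemma zonal_add_two (α : ℝ) (x : σ → ℝ) (n : ℕ) :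
    zonal α x (n + 2) = ((n : ℝ) + 2)⁻¹ • ((2 * (n + 1 + α)) • (linearForm x * zonal α x (n + 1)) -
      (n + 2 * α) • (normSqPoly * zonal α x n)) := rfl

lemma aeval_zonal (α : ℝ) (x y : σ → ℝ) (n : ℕ) :
    aeval y (zonal α x n) = gegenbauer α (y ⬝ᵥ y) (x ⬝ᵥ y) n := by
  rw [zonal, map_gegenbauer]
  simp [normSqPoly, linearForm, dotProduct, sq]

lemma isHomogeneous_zonal (α : ℝ) (x : σ → ℝ) (n : ℕ) : (zonal α x n).IsHomogeneous n := by
  have smul_mem {m : ℕ} (c : ℝ) {p : MvPolynomial σ ℝ} (hp : p.IsHomogeneous m) :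
      (c • p).IsHomogeneous m := (homogeneousSubmodule σ ℝ m).smul_mem c hp
  induction n using Nat.twoStepInduction with
  | zero => exact isHomogeneous_one _ _
  | one => exact smul_mem _ (isHomogeneous_linearForm x)
  | more n ih₀ ih₁ =>
    refine smul_mem _ (.sub (smul_mem _ ?_) (smul_mem _ ?_))
    · exact (by ring : 1 + (n + 1) = n + 2) ▸ (isHomogeneous_linearForm x).mul ih₁
    · exact add_comm 2 n ▸ isHomogeneous_normSqPoly.mul ih₀

lemma dirDeriv_zonal (α : ℝ) {x : σ → ℝ} (hx : x ⬝ᵥ x = 1) (n : ℕ) :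
    dirDeriv x (zonal α x (n + 1)) = (n + 2 * α) • zonal α x n := by
  have dirDeriv_self : dirDeriv x (linearForm x) = 1 := by rw [dirDeriv_linearForm, hx, C_1]
  induction n using Nat.twoStepInduction with
  | zero => simp [zonal_one, zonal_zero, dirDeriv_self]
  | one =>
    simp only [zonal_add_two, zonal_one, zonal_zero, Derivation.map_smul, map_sub,
      Derivation.leibniz, dirDeriv_self, dirDeriv_normSqPoly,
      smul_eq_mul, mul_smul_comm, mul_one, zero_add, two_mul]
    module
  | more n ih₀ ih₁ =>
    have recurrence := (eq_inv_smul_iff₀ (by positivity)).mp (zonal_add_two α x n)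
    rw [zonal_add_two, Derivation.map_smul, inv_smul_eq_iff₀ (by positivity)]
    simp only [map_sub, Derivation.map_smul, Derivation.leibniz, dirDeriv_self,
      dirDeriv_normSqPoly, ih₀, ih₁]
    simp only [smul_eq_C_mul, map_add, map_mul, map_natCast, map_ofNat, map_one, smul_eq_mul,
      Nat.cast_add, Nat.cast_one, Nat.cast_ofNat] at *
    linear_combination (-((n : MvPolynomial σ ℝ) + 1 + 2 * C α)) * recurrence

lemma polyLaplacian_zonal {α : ℝ} (hα : Fintype.card σ = 2 * α + 2) {x : σ → ℝ} (hx : x ⬝ᵥ x = 1)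
    (n : ℕ) : polyLaplacian (zonal α x n) = 0 := by
  induction n using Nat.twoStepInduction with
  | zero => simp [zonal_zero, polyLaplacian_apply]
  | one => simp [zonal_one, polyLaplacian_apply, pderiv_linearForm]
  | more n ih₀ ih₁ =>
    rw [zonal_add_two, map_smul, map_sub, map_smul, map_smul, polyLaplacian_linearForm_mul,
      polyLaplacian_normSqPoly_mul (isHomogeneous_zonal α x n), ih₀, ih₁, dirDeriv_zonal α hx, hα]
    simp only [smul_eq_C_mul, map_add, map_mul, map_natCast, map_ofNat, map_one]
    ring

lemma aeval_dirDeriv_self {n : ℕ} (x : σ → ℝ) {q : MvPolynomial σ ℝ} (hq : q.IsHomogeneous n) :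
    aeval x (dirDeriv x q) = n * aeval x q := by
  have euler := congr_arg (aeval x) hq.sum_X_mul_pderiv
  simpa [dirDeriv_apply] using euler

lemma fischer_one {q : MvPolynomial σ ℝ} (hq : q.IsHomogeneous 0) (x : σ → ℝ) :
    fischer 1 q = aeval x q := by
  obtain ⟨c, rfl⟩ : ∃ c, q = C c :=
    ⟨_, totalDegree_eq_zero_iff_eq_C.mp (Nat.le_zero.mp hq.totalDegree_le)⟩
  rw [← C_1, C_apply, fischer_monomial]
  simp

/-- The zonal polynomials are, up to a factor, the reproducing kernels of the harmonic polynomials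
for the Fischer form. -/
lemma fischer_zonal (α : ℝ) (x : σ → ℝ) {n : ℕ} {q : MvPolynomial σ ℝ} (hq : q.IsHomogeneous n)
    (hharm : polyLaplacian q = 0) :
    fischer (zonal α x n) q = (∏ i ∈ Finset.range n, 2 * (i + α)) * aeval x q := by
  induction n using Nat.twoStepInduction generalizing q with
  | zero => simpa [zonal_zero] using fischer_one hq x
  | one =>
    rw [zonal_one, map_smul, LinearMap.smul_apply, ← mul_one (linearForm x), fischer_linearForm_mul,
      fischer_one (isHomogeneous_dirDeriv x hq) x, aeval_dirDeriv_self x hq]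
    simp
  | more n _ ih =>
    have dirDeriv_harm : polyLaplacian (dirDeriv x q) = 0 := by
      rw [polyLaplacian_dirDeriv, hharm, map_zero]
    simp only [zonal_add_two, map_smul, map_sub, LinearMap.smul_apply, LinearMap.sub_apply,
      fischer_linearForm_mul, fischer_normSqPoly_mul, hharm, map_zero,
      ih (isHomogeneous_dirDeriv x hq) dirDeriv_harm, aeval_dirDeriv_self x hq]
    rw [Finset.prod_range_succ _ (n + 1)]
    push_cast
    simp only [smul_eq_mul]
    field_simp
    ring

lemma sum_gegenbauer_dotProduct_nonneg {α : ℝ} (hα : 0 < α) (hcard : Fintype.card σ = 2 * α + 2)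
    {ι : Type*} [Fintype ι] {x : ι → σ → ℝ} (hx : ∀ i, x i ⬝ᵥ x i = 1) (c : ι → ℝ) (n : ℕ) :
    0 ≤ ∑ i, ∑ j, c i * c j * gegenbauer α 1 (x i ⬝ᵥ x j) n := by
  have fischer_zonal_zonal (i j : ι) : fischer (zonal α (x i) n) (zonal α (x j) n) =
      (∏ k ∈ Finset.range n, 2 * (k + α)) * gegenbauer α 1 (x i ⬝ᵥ x j) n := by
    rw [fischer_zonal α _ (isHomogeneous_zonal α _ n) (polyLaplacian_zonal hcard (hx j) n),
      aeval_zonal, hx, dotProduct_comm]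
  have fischer_self : fischer (∑ i, c i • zonal α (x i) n) (∑ i, c i • zonal α (x i) n) =
      (∏ k ∈ Finset.range n, 2 * (k + α)) *
        ∑ i, ∑ j, c i * c j * gegenbauer α 1 (x i ⬝ᵥ x j) n := by
    simp only [map_sum, map_smul, LinearMap.sum_apply, LinearMap.smul_apply, fischer_zonal_zonal,
      Finset.mul_sum, smul_eq_mul]
    rw [Finset.sum_comm]
    exact Finset.sum_congr rfl fun i _ ↦ Finset.sum_congr rfl fun j _ ↦ by ring
  exact nonneg_of_mul_nonneg_right (fischer_self ▸ fischer_self_nonneg _)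
    (Finset.prod_pos fun k _ ↦ by positivity)

end Fischer

section IteratedIntegral

/-- The iterated antiderivatives of `f` that vanish at the origin. -/
noncomputable def iterIntegral (f : ℝ → ℝ) : ℕ → ℝ → ℝ
  | 0 => f
  | k + 1 => fun x ↦ ∫ u in (0 : ℝ)..x, iterIntegral f k u

variable {f : ℝ → ℝ}

lemma iterIntegral_succ_zero (k : ℕ) : iterIntegral f (k + 1) 0 = 0 := by
  simp [iterIntegral]

lemma continuous_iterIntegral (hf : Continuous f) (k : ℕ) : Continuous (iterIntegral f k) := by
  induction k with
  | zero => exact hf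
  | succ k ih => exact intervalIntegral.continuous_primitive ih.intervalIntegrable 0

lemma hasDerivAt_iterIntegral (hf : Continuous f) (k : ℕ) (x : ℝ) :
    HasDerivAt (iterIntegral f (k + 1)) (iterIntegral f k x) x :=
  (continuous_iterIntegral hf k).integral_hasStrictDerivAt 0 x |>.hasDerivAt

lemma integral_pow_mul_iterIntegral (hf : Continuous f) (k m : ℕ) (x : ℝ) :
    ∫ u in (0 : ℝ)..x, (x - u) ^ k / k.factorial * iterIntegral f m u =
      iterIntegral f (m + k + 1) x := by
  induction k generalizing m with
  | zero => simp [iterIntegral]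
  | succ k ih =>
    have hasDerivAt_pow (u : ℝ) : HasDerivAt (fun u ↦ (x - u) ^ (k + 1) / (k + 1).factorial)
        (-((x - u) ^ k / k.factorial)) u := by
      refine ((((hasDerivAt_id u).const_sub x).pow (k + 1)).div_const _).congr_deriv ?_
      simp [Nat.factorial_succ]
      field_simp
    have parts := intervalIntegral.integral_mul_deriv_eq_deriv_mul (a := 0) (b := x)
      (fun u _ ↦ hasDerivAt_pow u) (fun u _ ↦ hasDerivAt_iterIntegral hf m u)
      (by apply Continuous.intervalIntegrable; fun_prop)
      ((continuous_iterIntegral hf m).intervalIntegrable 0 x)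
    rw [parts, show m + (k + 1) + 1 = m + 1 + k + 1 by ring, ← ih (m + 1)]
    simp [iterIntegral_succ_zero]

end IteratedIntegral

section CosineCoefficients

/-- Up to a factor depending only on `j` and `k`, the coefficients of the truncated power
`u ↦ max (x - u) 0 ^ (k - 1)` with respect to the functions `(n + j) / j * C_n^j (cos u)`.
For `j = 0` they are the cosine coefficients, written as `k`-fold antiderivatives in `x`; raising
the index replaces a sequence by its weighted differences with step two. -/
noncomputable def gegenbauerCoeff (k : ℕ) : ℕ → ℕ → ℝ → ℝ
  | 0, n => iterIntegral (fun u ↦ cos (n * u)) k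
  | j + 1, n => fun x ↦ (gegenbauerCoeff k j n x - gegenbauerCoeff k j (n + 2) x) /
      (4 * (j + 1) * (n + j + 1))

lemma hasDerivAt_gegenbauerCoeff (k j n : ℕ) (x : ℝ) :
    HasDerivAt (gegenbauerCoeff (k + 1) j n) (gegenbauerCoeff k j n x) x := by
  induction j generalizing n with
  | zero => exact hasDerivAt_iterIntegral (by fun_prop) k x
  | succ j ih => exact ((ih n).sub (ih (n + 2))).div_const _

lemma gegenbauerCoeff_succ_zero (k j n : ℕ) : gegenbauerCoeff (k + 1) j n 0 = 0 := by
  induction j generalizing n with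
  | zero => exact iterIntegral_succ_zero k
  | succ j ih => simp [gegenbauerCoeff, ih]

lemma continuous_gegenbauerCoeff (k j n : ℕ) : Continuous (gegenbauerCoeff k j n) := by
  induction j generalizing n with
  | zero => exact continuous_iterIntegral (by fun_prop) k
  | succ j ih => exact ((ih n).sub (ih (n + 2))).div_const _

lemma mul_gegenbauerCoeff_succ_right (k j n : ℕ) (x : ℝ) :
    4 * (j + 1) * (n + j + 1) * gegenbauerCoeff k (j + 1) n x =
      gegenbauerCoeff k j n x - gegenbauerCoeff k j (n + 2) x := by
  rw [gegenbauerCoeff, mul_div_cancel₀]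
  positivity

lemma gegenbauerCoeff_succ_eq_integral (k j n : ℕ) (x : ℝ) :
    gegenbauerCoeff (k + 1) j n x = ∫ u in (0 : ℝ)..x, gegenbauerCoeff k j n u := by
  rw [intervalIntegral.integral_eq_sub_of_hasDerivAt
    (fun u _ ↦ hasDerivAt_gegenbauerCoeff k j n u)
    ((continuous_gegenbauerCoeff k j n).intervalIntegrable 0 x),
    gegenbauerCoeff_succ_zero, sub_zero]

lemma gegenbauerCoeff_zero_zero (n : ℕ) (x : ℝ) : gegenbauerCoeff 0 0 n x = cos (n * x) := rfl

lemma mul_gegenbauerCoeff_one_zero (n : ℕ) (x : ℝ) :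
    n * gegenbauerCoeff 1 0 n x = sin (n * x) := by
  simp [gegenbauerCoeff, iterIntegral]

lemma sq_mul_gegenbauerCoeff_two_zero (n : ℕ) (x : ℝ) :
    (n : ℝ) ^ 2 * gegenbauerCoeff 2 0 n x = 1 - cos (n * x) := by
  rw [gegenbauerCoeff_succ_eq_integral, sq, mul_assoc, ← intervalIntegral.integral_const_mul]
  simp [mul_gegenbauerCoeff_one_zero]

lemma gegenbauerCoeff_zero_add_sq_mul (k n : ℕ) (x : ℝ) :
    gegenbauerCoeff k 0 n x + n ^ 2 * gegenbauerCoeff (k + 2) 0 n x = x ^ k / k.factorial := by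
  induction k generalizing x with
  | zero => simp [sq_mul_gegenbauerCoeff_two_zero, gegenbauerCoeff_zero_zero]
  | succ k ih =>
    have integral_pow_div : ∫ u in (0 : ℝ)..x, u ^ k / k.factorial =
        x ^ (k + 1) / (k + 1).factorial := by
      simp [Nat.factorial_succ, div_div]
    rw [gegenbauerCoeff_succ_eq_integral, gegenbauerCoeff_succ_eq_integral,
      ← intervalIntegral.integral_const_mul, ← intervalIntegral.integral_add, ← integral_pow_div]
    · simp only [ih]
    · exact (continuous_gegenbauerCoeff ..).intervalIntegrable ..
    · exact ((continuous_gegenbauerCoeff ..).intervalIntegrable ..).const_mul _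

lemma gegenbauerCoeff_ode (k j n : ℕ) (x : ℝ) :
    gegenbauerCoeff k (j + 1) n x + n ^ 2 * gegenbauerCoeff (k + 2) (j + 1) n x =
        gegenbauerCoeff (k + 2) j (n + 2) x ∧
      gegenbauerCoeff k (j + 1) n x +
          (n + 2 * (j + 1)) ^ 2 * gegenbauerCoeff (k + 2) (j + 1) n x =
        gegenbauerCoeff (k + 2) j n x := by
  have succ_right (k : ℕ) := mul_gegenbauerCoeff_succ_right k j n x
  suffices H : gegenbauerCoeff k j n x + n ^ 2 * gegenbauerCoeff (k + 2) j n x =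
      gegenbauerCoeff k j (n + 2) x +
        (n + 2 + 2 * j) ^ 2 * gegenbauerCoeff (k + 2) j (n + 2) x by
    have ne_zero : (4 * (j + 1) * (n + j + 1) : ℝ) ≠ 0 := by positivity
    constructor <;> apply mul_left_cancel₀ ne_zero
    · linear_combination succ_right k + n ^ 2 * succ_right (k + 2) + H
    · linear_combination succ_right k + (n + 2 * (j + 1)) ^ 2 * succ_right (k + 2) + H
  cases j with
  | zero =>
    have rel := gegenbauerCoeff_zero_add_sq_mul k n x
    have rel' := gegenbauerCoeff_zero_add_sq_mul k (n + 2) x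
    push_cast at *
    linear_combination rel - rel'
  | succ j =>
    have rel := (gegenbauerCoeff_ode k j n x).1
    have rel' := (gegenbauerCoeff_ode k j (n + 2) x).2
    push_cast at *
    linear_combination rel - rel'

-- Duhamel's principle for `z'' + n ^ 2 * z = gegenbauerCoeff (k + 2) j (n + 2)`.
lemma gegenbauerCoeff_succ_eq_convolution (k j n : ℕ) (x : ℝ) :
    gegenbauerCoeff (k + 1) (j + 1) n x = ∫ u in (0 : ℝ)..x,
      gegenbauerCoeff 2 0 n (x - u) * gegenbauerCoeff k j (n + 2) u := by
  let a := fun k ↦ gegenbauerCoeff k 0 n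
  let f := fun k ↦ gegenbauerCoeff k j (n + 2)
  let z := fun k ↦ gegenbauerCoeff k (j + 1) n
  let Φ : ℝ → ℝ := fun u ↦ a 2 (x - u) * f (k + 1) u + a 1 (x - u) * f (k + 2) u +
    a 0 (x - u) * z (k + 1) u - n ^ 2 * a 1 (x - u) * z (k + 2) u
  have da (i : ℕ) (u : ℝ) : HasDerivAt (fun u ↦ a (i + 1) (x - u)) (-a i (x - u)) u := by
    simpa [Function.comp_def] using
      (hasDerivAt_gegenbauerCoeff i 0 n (x - u)).comp u ((hasDerivAt_id u).const_sub x)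
  have da_zero (u : ℝ) : HasDerivAt (fun u ↦ a 0 (x - u)) (n ^ 2 * a 1 (x - u)) u := by
    have := ((hasDerivAt_id u).const_sub x).const_mul (n : ℝ) |>.cos
    refine this.congr_deriv ?_
    simp only [a, ← mul_gegenbauerCoeff_one_zero, id]
    ring
  have df (i : ℕ) (u : ℝ) : HasDerivAt (f (i + 1)) (f i u) u := hasDerivAt_gegenbauerCoeff ..
  have dz (i : ℕ) (u : ℝ) : HasDerivAt (z (i + 1)) (z i u) u := hasDerivAt_gegenbauerCoeff ..
  have dΦ (u : ℝ) : HasDerivAt Φ (a 2 (x - u) * f k u) u := by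
    have ode : z k u + n ^ 2 * z (k + 2) u = f (k + 2) u := (gegenbauerCoeff_ode k j n u).1
    refine (((((da 1 u).mul (df k u)).add ((da 0 u).mul (df (k + 1) u))).add
      ((da_zero u).mul (dz k u))).sub
        (((da 0 u).const_mul ((n : ℝ) ^ 2)).mul (dz (k + 1) u))).congr_deriv ?_
    linear_combination a 0 (x - u) * ode
  have Φ_x : Φ x = gegenbauerCoeff (k + 1) (j + 1) n x := by
    simp [Φ, a, z, gegenbauerCoeff_succ_zero, gegenbauerCoeff_zero_zero]
  have Φ_zero : Φ 0 = 0 := by simp [Φ, f, z, gegenbauerCoeff_succ_zero]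
  rw [intervalIntegral.integral_eq_sub_of_hasDerivAt (fun u _ ↦ dΦ u), Φ_x, Φ_zero, sub_zero]
  have := continuous_gegenbauerCoeff 2 0 n
  have := continuous_gegenbauerCoeff k j (n + 2)
  apply Continuous.intervalIntegrable
  fun_prop

end CosineCoefficients

section CoefficientEstimates

lemma gegenbauerCoeff_two_zero_nonneg (n : ℕ) (x : ℝ) : 0 ≤ gegenbauerCoeff 2 0 n x := by
  rcases n.eq_zero_or_pos with rfl | hn
  · have := gegenbauerCoeff_zero_add_sq_mul 2 0 x
    simp only [Nat.cast_zero, ne_eq, OfNat.ofNat_ne_zero, not_false_eq_true, zero_pow, zero_mul,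
      add_zero] at this
    rw [this]
    positivity
  · refine nonneg_of_mul_nonneg_right ?_ (show (0 : ℝ) < n ^ 2 by positivity)
    rw [sq_mul_gegenbauerCoeff_two_zero]
    exact sub_nonneg.2 (cos_le_one _)

lemma countable_zeros_gegenbauerCoeff_two_zero (n : ℕ) :
    {x ∈ Ioi (0 : ℝ) | gegenbauerCoeff 2 0 n x = 0}.Countable := by
  rcases n.eq_zero_or_pos with rfl | hn
  · convert countable_empty (α := ℝ)
    ext x
    have := gegenbauerCoeff_zero_add_sq_mul 2 0 x
    simp_all [ne_of_gt]
  · refine (countable_range fun m : ℤ ↦ m * (2 * π) / n).mono ?_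
    rintro x ⟨-, hx⟩
    have cos_eq_one : cos (n * x) = 1 := by
      linarith [hx ▸ sq_mul_gegenbauerCoeff_two_zero n x]
    obtain ⟨m, hm⟩ := (cos_eq_one_iff _).1 cos_eq_one
    exact ⟨m, by field_simp; linarith⟩

lemma convolution_pos {f g : ℝ → ℝ} (hf : Continuous f) (hg : Continuous g)
    (f_nonneg : ∀ u ∈ Ici 0, 0 ≤ f u) (g_nonneg : ∀ u ∈ Ici 0, 0 ≤ g u)
    (f_zeros : {u ∈ Ioi 0 | f u = 0}.Countable) (g_zeros : {u ∈ Ioi 0 | g u = 0}.Countable)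
    {x : ℝ} (hx : 0 < x) : 0 < ∫ u in (0 : ℝ)..x, f (x - u) * g u := by
  have zeros_countable :
      ((x - ·) '' {u ∈ Ioi 0 | f u = 0} ∪ {u ∈ Ioi 0 | g u = 0}).Countable :=
    (f_zeros.image _).union g_zeros
  obtain ⟨u, hu, hu'⟩ : (Ioo 0 x \
      ((x - ·) '' {u ∈ Ioi 0 | f u = 0} ∪ {u ∈ Ioi 0 | g u = 0})).Nonempty := by
    by_contra h
    exact (Cardinal.Real.Ioo_countable_iff.not.2 hx.not_ge)
      (zeros_countable.mono (sdiff_eq_bot_iff.1 (not_nonempty_iff_eq_empty.1 h)))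
  refine intervalIntegral.integral_pos hx (by fun_prop) (fun v hv ↦ ?_)
    ⟨u, Ioo_subset_Icc_self hu, ?_⟩
  · exact mul_nonneg (f_nonneg _ (sub_nonneg.2 hv.2)) (g_nonneg _ hv.1.le)
  · have f_ne : f (x - u) ≠ 0 := fun h ↦ hu' (.inl ⟨x - u, ⟨sub_pos.2 hu.2, h⟩, by simp⟩)
    have g_ne : g u ≠ 0 := fun h ↦ hu' (.inr ⟨hu.1, h⟩)
    exact mul_pos ((f_nonneg _ (sub_nonneg.2 hu.2.le)).lt_of_ne' f_ne)
      ((g_nonneg _ hu.1.le).lt_of_ne' g_ne)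

lemma gegenbauerCoeff_pos (j n : ℕ) {x : ℝ} (hx : 0 < x) :
    0 < gegenbauerCoeff (j + 3) (j + 1) n x := by
  suffices H : ∀ n, (∀ u ∈ Ici 0, 0 ≤ gegenbauerCoeff (j + 2) j n u) ∧
      {u ∈ Ioi 0 | gegenbauerCoeff (j + 2) j n u = 0}.Countable by
    rw [gegenbauerCoeff_succ_eq_convolution]
    exact convolution_pos (continuous_gegenbauerCoeff ..) (continuous_gegenbauerCoeff ..)
      (fun u _ ↦ gegenbauerCoeff_two_zero_nonneg n u) (H (n + 2)).1
      (countable_zeros_gegenbauerCoeff_two_zero n) (H (n + 2)).2 hx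
  intro m
  cases j with
  | zero => exact ⟨fun u _ ↦ gegenbauerCoeff_two_zero_nonneg m u,
      countable_zeros_gegenbauerCoeff_two_zero m⟩
  | succ j =>
    have pos {u : ℝ} (hu : 0 < u) := gegenbauerCoeff_pos j m hu
    constructor
    · intro u hu
      rcases (mem_Ici.1 hu).eq_or_lt with rfl | hu
      · exact (gegenbauerCoeff_succ_zero ..).ge
      · exact (pos hu).le
    · convert countable_empty (α := ℝ)
      exact eq_empty_of_forall_notMem fun u hu ↦ (pos hu.1).ne' hu.2

lemma abs_gegenbauerCoeff_zero_le (k n : ℕ) {x : ℝ} (hx : x ∈ Icc 0 π) :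
    |gegenbauerCoeff k 0 n x| ≤ π ^ k := by
  induction k generalizing x with
  | zero => simpa [gegenbauerCoeff_zero_zero] using abs_cos_le_one (n * x)
  | succ k ih =>
    rw [gegenbauerCoeff_succ_eq_integral, pow_succ]
    calc |∫ u in (0 : ℝ)..x, gegenbauerCoeff k 0 n u| ≤ π ^ k * |x - 0| := by
          refine intervalIntegral.norm_integral_le_of_norm_le_const
            fun u hu ↦ (norm_eq_abs _).trans_le (ih ?_)
          rw [uIoc_of_le hx.1] at hu
          exact ⟨hu.1.le, hu.2.trans hx.2⟩
      _ ≤ π ^ k * π := by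
          rw [sub_zero, abs_of_nonneg hx.1]
          gcongr
          exact hx.2

lemma exists_abs_gegenbauerCoeff_zero_le (k : ℕ) : ∃ K, 0 ≤ K ∧ ∀ n : ℕ, ∀ x ∈ Icc 0 π,
    |gegenbauerCoeff (k + 2) 0 n x| ≤ K / (n + 1) ^ 2 := by
  refine ⟨2 * (π ^ k + π ^ k) + 2 * π ^ (k + 2), by positivity, fun n x hx ↦ ?_⟩
  have sq_mul_le : (n : ℝ) ^ 2 * |gegenbauerCoeff (k + 2) 0 n x| ≤ π ^ k + π ^ k := by
    have pow_div_le : |x ^ k / k.factorial| ≤ π ^ k := by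
      rw [abs_of_nonneg (div_nonneg (pow_nonneg hx.1 k) (by positivity))]
      exact (div_le_self (pow_nonneg hx.1 k) (mod_cast k.factorial_pos)).trans
        (pow_le_pow_left₀ hx.1 hx.2 k)
    rw [← abs_of_nonneg (sq_nonneg (n : ℝ)), ← abs_mul,
      ← sub_eq_of_eq_add' (gegenbauerCoeff_zero_add_sq_mul k n x).symm]
    exact (abs_sub _ _).trans (add_le_add pow_div_le (abs_gegenbauerCoeff_zero_le k n hx))
  have le := abs_gegenbauerCoeff_zero_le (k + 2) n hx
  rw [le_div_iff₀ (by positivity)]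
  calc |gegenbauerCoeff (k + 2) 0 n x| * ((n : ℝ) + 1) ^ 2
      ≤ |gegenbauerCoeff (k + 2) 0 n x| * (2 * n ^ 2 + 2) := by
        gcongr
        nlinarith [sq_nonneg ((n : ℝ) - 1)]
    _ ≤ 2 * (π ^ k + π ^ k) + 2 * π ^ (k + 2) := by linarith

lemma exists_abs_gegenbauerCoeff_le (k j : ℕ) : ∃ K, 0 ≤ K ∧ ∀ n : ℕ, ∀ x ∈ Icc 0 π,
    |gegenbauerCoeff (j + k + 2) j n x| ≤ K / (n + 1) ^ (2 * j + 2) := by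
  induction j with
  | zero => simpa using exists_abs_gegenbauerCoeff_zero_le k
  | succ j ih =>
    obtain ⟨K, hK, le⟩ := ih
    obtain ⟨K', hK', le'⟩ := exists_abs_gegenbauerCoeff_zero_le 0
    refine ⟨K' * K * π, by positivity, fun n x hx ↦ ?_⟩
    rw [show j + 1 + k + 2 = j + k + 2 + 1 by ring, gegenbauerCoeff_succ_eq_convolution]
    have integrand_le : ∀ u ∈ uIoc 0 x, ‖gegenbauerCoeff 2 0 n (x - u) *
        gegenbauerCoeff (j + k + 2) j (n + 2) u‖ ≤ K' * K / (n + 1) ^ (2 * (j + 1) + 2) := by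
      intro u hu
      rw [uIoc_of_le hx.1] at hu
      calc ‖gegenbauerCoeff 2 0 n (x - u) * gegenbauerCoeff (j + k + 2) j (n + 2) u‖
          ≤ K' / (n + 1) ^ 2 * (K / ((n + 2 : ℕ) + 1) ^ (2 * j + 2)) := by
            rw [norm_mul]
            gcongr
            · exact le' n _ ⟨by linarith [hu.2], by linarith [hu.1, hx.2]⟩
            · exact le (n + 2) u ⟨hu.1.le, hu.2.trans hx.2⟩
        _ ≤ K' / (n + 1) ^ 2 * (K / (n + 1) ^ (2 * j + 2)) := by
            gcongr
            omega
        _ = K' * K / (n + 1) ^ (2 * (j + 1) + 2) := by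
            rw [div_mul_div_comm, ← pow_add]
            congr 2
            ring
    refine (intervalIntegral.norm_integral_le_of_norm_le_const integrand_le).trans ?_
    rw [sub_zero, abs_of_nonneg hx.1, mul_div_right_comm (K' * K)]
    gcongr
    exact hx.2

end CoefficientEstimates

section CosineSeries

variable {F : ℝ → ℝ}

lemma fourier_add_fourier_neg (n : ℤ) (u : ℝ) :
    fourier n (u : AddCircle (2 * π)) + fourier (-n) (u : AddCircle (2 * π)) =
      ((2 * cos (n * u) : ℝ) : ℂ) := by
  simp only [fourier_coe_apply, Complex.ofReal_mul, Complex.ofReal_cos, Complex.cos]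
  push_cast
  field_simp

lemma fourierCoeff_comp_norm [Fact (0 < 2 * π)] (hF : Continuous F) (n : ℤ) :
    fourierCoeff (fun z : AddCircle (2 * π) ↦ (F ‖z‖ : ℂ)) n =
      (((∫ u in (0 : ℝ)..π, F u * cos (n * u)) / π : ℝ) : ℂ) := by
  let G : ℝ → ℂ := fun u ↦
    fourier (-n) (u : AddCircle (2 * π)) • (F ‖(u : AddCircle (2 * π))‖ : ℂ)
  have hG : Continuous G := by
    have : Continuous ((↑) : ℝ → AddCircle (2 * π)) := AddCircle.continuous_mk' _
    fun_prop
  have fold : ∫ u in -π..π, G u = ∫ u in (0 : ℝ)..π, (G (-u) + G u) := by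
    have hG_neg : Continuous fun u ↦ G (-u) := by fun_prop
    rw [intervalIntegral.integral_add (hG_neg.intervalIntegrable ..) (hG.intervalIntegrable ..),
      intervalIntegral.integral_comp_neg, neg_zero,
      intervalIntegral.integral_add_adjacent_intervals (hG.intervalIntegrable ..)
        (hG.intervalIntegrable ..)]
  have G_fold : ∀ u ∈ uIcc 0 π, G (-u) + G u = ((2 * (F u * cos (n * u)) : ℝ) : ℂ) := by
    intro u hu
    rw [uIcc_of_le pi_pos.le] at hu
    have norm_eq : ‖(u : AddCircle (2 * π))‖ = u := by
      rw [(AddCircle.norm_coe_eq_abs_iff _ two_pi_pos.ne').2, abs_of_nonneg hu.1]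
      rw [abs_of_nonneg hu.1, abs_of_pos two_pi_pos]
      linarith [hu.2]
    have fourier_reflect : fourier (-n) ((-u : ℝ) : AddCircle (2 * π)) =
        fourier n (u : AddCircle (2 * π)) := by
      simp [fourier_apply]
    simp only [G, fourier_reflect]
    rw [AddCircle.coe_neg, norm_neg, norm_eq, ← add_smul, fourier_add_fourier_neg, smul_eq_mul,
      ← Complex.ofReal_mul]
    ring_nf
  rw [fourierCoeff_eq_intervalIntegral _ n (-π), show -π + 2 * π = π by ring, fold,
    intervalIntegral.integral_congr G_fold, intervalIntegral.integral_ofReal,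
    intervalIntegral.integral_const_mul, Complex.real_smul, ← Complex.ofReal_mul]
  congr 1
  field_simp

/-- The function `(n + j) / j * C_n^j (cos θ)`, which up to normalisation is the zonal harmonic of
degree `n` in dimension `2 * j + 2`; its limit as `j → 0` is taken for `j = 0`. -/
noncomputable def zonalKernel (θ : ℝ) : ℕ → ℕ → ℝ
  | 0, n => if n = 0 then 1 else 2 * cos (n * θ)
  | j + 1, n => (n + (j + 1)) / (j + 1) * gegenbauer (j + 1) 1 (cos θ) n

theorem hasSum_cosine_series (hF : Continuous F)
    (hsum : Summable fun n : ℕ ↦ ∫ u in (0 : ℝ)..π, F u * cos (n * u))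
    {θ : ℝ} (hθ : θ ∈ Icc 0 π) :
    HasSum (fun n : ℕ ↦ zonalKernel θ 0 n * ∫ u in (0 : ℝ)..π, F u * cos (n * u)) (π * F θ) := by
  have : Fact (0 < 2 * π) := ⟨two_pi_pos⟩
  let c : ℤ → ℝ := fun n ↦ ∫ u in (0 : ℝ)..π, F u * cos (n * u)
  let f : C(AddCircle (2 * π), ℂ) := ⟨fun z ↦ (F ‖z‖ : ℂ), by fun_prop⟩
  have coeff (n : ℤ) : fourierCoeff f n = ((c n / π : ℝ) : ℂ) := fourierCoeff_comp_norm hF n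
  have c_neg (n : ℤ) : c (-n) = c n := by simp [c]
  have summable_coeff : Summable (fourierCoeff f) := by
    have : Summable fun n : ℤ ↦ c n / π :=
      Summable.of_nat_of_neg (hsum.div_const π) (by simpa [c] using hsum.div_const π)
    exact (Complex.summable_ofReal.2 this).congr fun n ↦ (coeff n).symm
  have f_θ : f (θ : AddCircle (2 * π)) = (F θ : ℂ) := by
    have : ‖(θ : AddCircle (2 * π))‖ = |θ| := by
      rw [AddCircle.norm_coe_eq_abs_iff _ two_pi_pos.ne', abs_of_nonneg hθ.1,
        abs_of_pos two_pi_pos]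
      linarith [hθ.2]
    simp only [f, ContinuousMap.coe_mk, this, abs_of_nonneg hθ.1]
  have fourier_series :=
    (has_pointwise_sum_fourier_series_of_summable summable_coeff
      (θ : AddCircle (2 * π))).nat_add_neg
  have real_series : HasSum (fun n : ℕ ↦ c n / π * (2 * cos (n * θ))) (F θ + c 0 / π) := by
    rw [← Complex.hasSum_ofReal]
    convert fourier_series using 1
    · ext n
      simp only [coeff, c_neg, ← smul_add, fourier_add_fourier_neg]
      simp
    · simp [f_θ, coeff]
  have rescaled := (real_series.sub (hasSum_ite_eq 0 (c 0 / π))).mul_left π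
  rw [add_sub_cancel_right] at rescaled
  refine rescaled.congr_fun fun n ↦ ?_
  rcases eq_or_ne n 0 with rfl | hn
  · simp [zonalKernel, c]
    field_simp
    ring
  · simp [zonalKernel, hn, c]
    field_simp

end CosineSeries

section GegenbauerSeries

lemma zonalKernel_zero_right (θ : ℝ) (j : ℕ) :
    zonalKernel θ j 0 = gegenbauer (j + 1 : ℝ) 1 (cos θ) 0 := by
  cases j with
  | zero => simp [zonalKernel, gegenbauer]
  | succ j =>
    simp only [zonalKernel, gegenbauer]
    push_cast
    field_simp
    ring

lemma zonalKernel_one_right (θ : ℝ) (j : ℕ) :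
    zonalKernel θ j 1 = gegenbauer (j + 1 : ℝ) 1 (cos θ) 1 := by
  cases j with
  | zero => simp [zonalKernel, gegenbauer]
  | succ j =>
    simp only [zonalKernel, gegenbauer, smul_eq_mul]
    push_cast
    field_simp
    ring

lemma zonalKernel_add_two (θ : ℝ) (j n : ℕ) :
    zonalKernel θ j (n + 2) = gegenbauer (j + 1 : ℝ) 1 (cos θ) (n + 2) -
      gegenbauer (j + 1 : ℝ) 1 (cos θ) n := by
  cases j with
  | zero =>
    have := gegenbauer_one_cos_sub θ n
    simp_all [zonalKernel]
  | succ j =>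
    have := gegenbauer_eq_sub_shift (j + 1) (cos θ) n
    rw [zonalKernel, div_mul_eq_mul_div, div_eq_iff (by positivity)]
    push_cast
    linear_combination this

lemma abs_gegenbauer_le_of_abs_zonalKernel_le {θ : ℝ} {j : ℕ}
    (hZ : ∀ n : ℕ, |zonalKernel θ j n| ≤ 2 * (n + 1) ^ (2 * j)) (n : ℕ) :
    |gegenbauer (j + 1 : ℝ) 1 (cos θ) n| ≤ 2 * (n + 1) ^ (2 * j + 1) := by
  induction n using Nat.twoStepInduction with
  | zero => simpa [zonalKernel_zero_right] using hZ 0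
  | one =>
    rw [← zonalKernel_one_right]
    refine (hZ 1).trans ?_
    gcongr <;> norm_num
  | more n ih _ =>
    let G := fun n ↦ gegenbauer (j + 1 : ℝ) 1 (cos θ) n
    have pow_le : ((n : ℝ) + 1) ^ (2 * j) ≤ ((n + 2 : ℕ) + 1) ^ (2 * j) := by
      gcongr
      simp
    calc |G (n + 2)| = |zonalKernel θ j (n + 2) + G n| := by
          rw [zonalKernel_add_two, sub_add_cancel]
      _ ≤ 2 * ((n + 2 : ℕ) + 1) ^ (2 * j) + 2 * (n + 1) ^ (2 * j + 1) :=
          (abs_add_le _ _).trans (add_le_add (hZ (n + 2)) ih)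
      _ = 2 * (((n + 2 : ℕ) + 1) ^ (2 * j) + (n + 1) ^ (2 * j) * (n + 1)) := by ring
      _ ≤ 2 * (((n + 2 : ℕ) + 1) ^ (2 * j) + ((n + 2 : ℕ) + 1) ^ (2 * j) * (n + 1)) := by gcongr
      _ ≤ 2 * ((n + 2 : ℕ) + 1) ^ (2 * j + 1) := by
          have : (0 : ℝ) ≤ ((n + 2 : ℕ) + 1) ^ (2 * j) := by positivity
          rw [pow_succ]
          push_cast at *
          linarith

lemma abs_zonalKernel_le (θ : ℝ) (j n : ℕ) : |zonalKernel θ j n| ≤ 2 * (n + 1) ^ (2 * j) := by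
  induction j generalizing n with
  | zero =>
    rw [zonalKernel, mul_zero, pow_zero, mul_one]
    split_ifs
    · simp
    · rw [abs_mul, abs_two]
      linarith [abs_cos_le_one (n * θ)]
  | succ j ih =>
    have factor_le : ((n : ℝ) + (j + 1)) / (j + 1) ≤ n + 1 := by
      rw [div_le_iff₀ (by positivity)]
      nlinarith [mul_nonneg (n.cast_nonneg (α := ℝ)) (j.cast_nonneg (α := ℝ))]
    rw [zonalKernel, abs_mul, abs_of_nonneg (by positivity)]
    calc ((n : ℝ) + (j + 1)) / (j + 1) * |gegenbauer (j + 1 : ℝ) 1 (cos θ) n|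
        ≤ (n + 1) * (2 * (n + 1) ^ (2 * j + 1)) := by
          gcongr
          exact abs_gegenbauer_le_of_abs_zonalKernel_le ih n
      _ = 2 * (n + 1) ^ (2 * (j + 1)) := by ring

lemma abs_gegenbauer_le (θ : ℝ) (j n : ℕ) :
    |gegenbauer (j + 1 : ℝ) 1 (cos θ) n| ≤ 2 * (n + 1) ^ (2 * j + 1) :=
  abs_gegenbauer_le_of_abs_zonalKernel_le (abs_zonalKernel_le θ j) n

lemma hasSum_mul_sub_add_two {G Z a : ℕ → ℝ} {S : ℝ} (zero : Z 0 = G 0) (one : Z 1 = G 1)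
    (add_two : ∀ n, Z (n + 2) = G (n + 2) - G n) (hZ : HasSum (fun n ↦ Z n * a n) S)
    (hlim : Filter.Tendsto (fun n ↦ G n * a n) Filter.atTop (nhds 0))
    (hG : Summable fun n ↦ G n * (a n - a (n + 2))) :
    HasSum (fun n ↦ G n * (a n - a (n + 2))) S := by
  have summation_by_parts (N : ℕ) : ∑ n ∈ Finset.range N, G n * (a n - a (n + 2)) =
      ∑ n ∈ Finset.range (N + 2), Z n * a n - (G N * a N + G (N + 1) * a (N + 1)) := by
    induction N with
    | zero => simp [Finset.sum_range_succ, zero, one]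
    | succ N ih =>
      rw [Finset.sum_range_succ, ih, Finset.sum_range_succ _ (N + 2), add_two]
      ring
  have tendsto_S := (hZ.tendsto_sum_nat.comp (Filter.tendsto_add_atTop_nat 2)).sub
    (hlim.add (hlim.comp (Filter.tendsto_add_atTop_nat 1)))
  rw [add_zero, sub_zero] at tendsto_S
  exact (hG.hasSum_iff_tendsto_nat).2 (tendsto_S.congr fun N ↦ (summation_by_parts N).symm)

lemma summable_of_abs_le_div_sq {a : ℕ → ℝ} {K : ℝ} (h : ∀ n : ℕ, |a n| ≤ K / (n + 1) ^ 2) :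
    Summable a := by
  refine Summable.of_norm_bounded (g := fun n : ℕ ↦ K / (n + 1) ^ 2) ?_ h
  have := (summable_nat_add_iff 1).2 (summable_one_div_nat_pow.2 one_lt_two)
  simpa [div_eq_mul_inv] using this.mul_left K

lemma summable_zonalKernel_mul_gegenbauerCoeff {L j : ℕ} (hj : j ≤ L) {x : ℝ}
    (hx : x ∈ Icc 0 π) (θ : ℝ) :
    Summable fun n ↦ zonalKernel θ j n * gegenbauerCoeff (L + 2) j n x := by
  obtain ⟨k, rfl⟩ := Nat.exists_eq_add_of_le hj
  obtain ⟨K, -, le⟩ := exists_abs_gegenbauerCoeff_le k j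
  refine summable_of_abs_le_div_sq (K := 2 * K) fun n ↦ ?_
  rw [abs_mul]
  calc _ ≤ 2 * ((n : ℝ) + 1) ^ (2 * j) * (K / (n + 1) ^ (2 * j + 2)) := by
        gcongr
        exacts [abs_zonalKernel_le θ j n, le n x hx]
    _ = 2 * K / ((n : ℝ) + 1) ^ 2 := by
        rw [pow_add]
        field_simp

lemma hasSum_zonalKernel_succ {L j : ℕ} (hj : j + 1 ≤ L) {x : ℝ} (hx : x ∈ Icc 0 π) {θ S : ℝ}
    (hS : HasSum (fun n ↦ zonalKernel θ j n * gegenbauerCoeff (L + 2) j n x) S) :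
    HasSum (fun n ↦ zonalKernel θ (j + 1) n * gegenbauerCoeff (L + 2) (j + 1) n x)
      (S / (4 * (j + 1) ^ 2)) := by
  obtain ⟨k, rfl⟩ := Nat.exists_eq_add_of_le hj
  let G := fun n ↦ gegenbauer (j + 1 : ℝ) 1 (cos θ) n
  let a := fun n ↦ gegenbauerCoeff (j + 1 + k + 2) j n x
  have summand_eq (n : ℕ) : zonalKernel θ (j + 1) n *
      gegenbauerCoeff (j + 1 + k + 2) (j + 1) n x =
        G n * (a n - a (n + 2)) * (4 * (j + 1 : ℝ) ^ 2)⁻¹ := by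
    simp only [a, ← mul_gegenbauerCoeff_succ_right, zonalKernel, G]
    field_simp
    ring
  obtain ⟨K, -, le⟩ := exists_abs_gegenbauerCoeff_le (k + 1) j
  have tendsto_zero : Filter.Tendsto (fun n ↦ G n * a n) Filter.atTop (nhds 0) := by
    refine squeeze_zero_norm (a := fun n : ℕ ↦ 2 * K * (1 / (n + 1))) (fun n ↦ ?_)
      (by simpa using tendsto_one_div_add_atTop_nhds_zero_nat.const_mul (2 * K))
    rw [norm_mul]
    calc _ ≤ 2 * ((n : ℝ) + 1) ^ (2 * j + 1) * (K / (n + 1) ^ (2 * j + 2)) := by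
          gcongr
          · exact abs_gegenbauer_le θ j n
          · simpa only [a, norm_eq_abs, show j + (k + 1) + 2 = j + 1 + k + 2 by ring]
              using le n x hx
      _ = 2 * K * (1 / ((n : ℝ) + 1)) := by
          rw [pow_succ _ (2 * j + 1)]
          field_simp
  have summable_G : Summable fun n ↦ G n * (a n - a (n + 2)) :=
    (summable_mul_right_iff (by positivity)).1 <|
      (summable_zonalKernel_mul_gegenbauerCoeff hj hx θ).congr summand_eq
  exact ((hasSum_mul_sub_add_two (zonalKernel_zero_right θ j) (zonalKernel_one_right θ j)
    (zonalKernel_add_two θ j) hS tendsto_zero summable_G).mul_right _).congr_fun summand_eq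

lemma integral_truncated_pow_mul_cos (L n : ℕ) {x : ℝ} (hx : x ∈ Icc 0 π) :
    ∫ u in (0 : ℝ)..π, max (x - u) 0 ^ (L + 1) / (L + 1).factorial * cos (n * u) =
      gegenbauerCoeff (L + 2) 0 n x := by
  have left : ∫ u in (0 : ℝ)..x, max (x - u) 0 ^ (L + 1) / (L + 1).factorial * cos (n * u) =
      gegenbauerCoeff (L + 2) 0 n x := by
    have := integral_pow_mul_iterIntegral (f := fun u ↦ cos (n * u)) (by fun_prop) (L + 1) 0 x
    rw [gegenbauerCoeff, show L + 2 = 0 + (L + 1) + 1 by ring, ← this]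
    refine intervalIntegral.integral_congr fun u hu ↦ ?_
    rw [uIcc_of_le hx.1] at hu
    simp only [max_eq_left (sub_nonneg.2 hu.2), iterIntegral]
  have right : ∫ u in x..π, max (x - u) 0 ^ (L + 1) / (L + 1).factorial * cos (n * u) = 0 := by
    refine (intervalIntegral.integral_congr fun u hu ↦ ?_).trans intervalIntegral.integral_zero
    rw [uIcc_of_le hx.2] at hu
    simp [max_eq_right (sub_nonpos.2 hu.1)]
  have integrable (a b : ℝ) : IntervalIntegrable
      (fun u ↦ max (x - u) 0 ^ (L + 1) / (L + 1).factorial * cos (n * u)) volume a b := by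
    apply Continuous.intervalIntegrable
    fun_prop
  rw [← intervalIntegral.integral_add_adjacent_intervals (integrable 0 x) (integrable x π),
    left, right, add_zero]

theorem hasSum_zonalKernel_truncated_pow {L j : ℕ} (hj : j ≤ L) {x θ : ℝ} (hx : x ∈ Icc 0 π)
    (hθ : θ ∈ Icc 0 π) :
    HasSum (fun n ↦ zonalKernel θ j n * gegenbauerCoeff (L + 2) j n x)
      (π * (max (x - θ) 0 ^ (L + 1) / (L + 1).factorial) / (4 ^ j * j.factorial ^ 2)) := by
  induction j with
  | zero =>
    have hcont : Continuous fun u ↦ max (x - u) 0 ^ (L + 1) / (L + 1).factorial := by fun_prop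
    obtain ⟨K, -, le⟩ := exists_abs_gegenbauerCoeff_le L 0
    have := hasSum_cosine_series hcont (hθ := hθ) <| by
      simp only [integral_truncated_pow_mul_cos L _ hx]
      exact summable_of_abs_le_div_sq fun n ↦ by simpa using le n x hx
    simpa [integral_truncated_pow_mul_cos L _ hx] using this
  | succ j ih =>
    convert hasSum_zonalKernel_succ hj hx (ih (by omega)) using 1
    rw [Nat.factorial_succ j]
    push_cast
    field_simp
    ring

end GegenbauerSeries

section TruncatedPowers

lemma strictPosDefOnSphere_iff {d : ℕ} {g : ℝ → ℝ} :
    StrictPosDefOnSphere d g ↔ ∀ (N : ℕ) (x : Fin N → EuclideanSpace ℝ (Fin d)),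
      (∀ i, ‖x i‖ = 1) → Function.Injective x → ∀ c : Fin N → ℝ, c ≠ 0 →
        0 < ∑ i, ∑ j, c i * c j * g (arccos ⟪x i, x j⟫) := by
  refine forall₂_congr fun N x ↦ forall₂_congr fun _ _ ↦ ?_
  have hermitian : (Matrix.of fun i j ↦ g (arccos ⟪x i, x j⟫)).IsHermitian :=
    Matrix.ext fun i j ↦ by simp [real_inner_comm]
  simp only [Matrix.posDef_iff_dotProduct_mulVec, hermitian, true_and, dotProduct, Matrix.mulVec,
    Matrix.of_apply, star_trivial, Finset.mul_sum]
  exact forall₂_congr fun c _ ↦ iff_of_eq (congrArg _ (Finset.sum_congr rfl fun i _ ↦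
    Finset.sum_congr rfl fun j _ ↦ by ring))

-- The Gegenbauer polynomials span all polynomials; test with one that vanishes off the diagonal.
lemma eq_zero_of_sum_gegenbauer_eq_zero {α : ℝ} (hα : 0 < α) {ι : Type*} [Fintype ι]
    {t : ι → ι → ℝ} (ht : ∀ i, t i i = 1) (ht' : ∀ i j, i ≠ j → t i j ≠ 1) {c : ι → ℝ}
    (hc : ∀ n, ∑ i, ∑ j, c i * c j * gegenbauer α 1 (t i j) n = 0) : c = 0 := by
  classical
  let Φ : Polynomial ℝ →ₗ[ℝ] ℝ :=
    ∑ i, ∑ j, (c i * c j) • (Polynomial.aeval (t i j)).toLinearMap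
  have Φ_apply (p : Polynomial ℝ) : Φ p = ∑ i, ∑ j, c i * c j * p.eval (t i j) := by
    simp [Φ, LinearMap.sum_apply, Polynomial.coe_aeval_eq_eval]
  have Φ_eq_zero : Φ = 0 := by
    refine LinearMap.ext_on_range (v := gegenbauer α 1 Polynomial.X)
      (span_gegenbauer_eq_top hα) fun n ↦ ?_
    simp only [Φ_apply, ← Polynomial.coe_aeval_eq_eval, map_gegenbauer, map_one,
      Polynomial.aeval_X, hc, LinearMap.zero_apply]
  let p := Lagrange.nodal (Finset.univ : Finset ι).offDiag fun q ↦ t q.1 q.2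
  have p_one : p.eval 1 ≠ 0 := Lagrange.eval_nodal_not_at_node fun q hq ↦
    (ht' q.1 q.2 (Finset.mem_offDiag.1 hq).2.2).symm
  have p_offDiag (i j : ι) (hij : j ≠ i) : p.eval (t i j) = 0 :=
    Lagrange.eval_nodal_at_node (v := fun q : ι × ι ↦ t q.1 q.2) (i := (i, j))
      (by simpa using hij.symm)
  have sum_sq_mul : (∑ i, c i ^ 2) * p.eval 1 = 0 := by
    refine Eq.trans ?_ (LinearMap.congr_fun Φ_eq_zero p)
    rw [Φ_apply, Finset.sum_mul]
    refine Finset.sum_congr rfl fun i _ ↦ ?_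
    rw [Finset.sum_eq_single i (fun j _ hj ↦ by rw [p_offDiag i j hj, mul_zero]) (by simp), ht, sq]
  have sum_sq := (mul_eq_zero.1 sum_sq_mul).resolve_right p_one
  rw [Finset.sum_eq_zero_iff_of_nonneg fun _ _ ↦ sq_nonneg _] at sum_sq
  exact funext fun i ↦ pow_eq_zero_iff two_ne_zero |>.1 (sum_sq i (Finset.mem_univ i))

theorem strictPosDefOnSphere_of_hasSum_gegenbauer {d : ℕ} {α : ℝ} (hα : 0 < α)
    (hd : d = 2 * α + 2) {g : ℝ → ℝ} {b : ℕ → ℝ} (hb : ∀ n, 0 < b n)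
    (hg : ∀ θ ∈ Icc 0 π, HasSum (fun n ↦ b n * gegenbauer α 1 (cos θ) n) (g θ)) :
    StrictPosDefOnSphere d g := by
  refine strictPosDefOnSphere_iff.2 fun N x norm_x x_inj c hc ↦ ?_
  let q := fun n ↦ ∑ i, ∑ j, c i * c j * gegenbauer α 1 ⟪x i, x j⟫ n
  have inner_self (i : Fin N) : ⟪x i, x i⟫ = 1 := by simp [norm_x i]
  have inner_ne_one (i j : Fin N) (hij : i ≠ j) : ⟪x i, x j⟫ ≠ 1 := fun h ↦
    hij (x_inj ((inner_eq_one_iff_of_norm_eq_one (norm_x i) (norm_x j)).1 h))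
  have hasSum_q : HasSum (fun n ↦ b n * q n) (∑ i, ∑ j, c i * c j * g (arccos ⟪x i, x j⟫)) := by
    have cos_arccos_inner (i j : Fin N) : cos (arccos ⟪x i, x j⟫) = ⟪x i, x j⟫ := by
      have := abs_le.1 (abs_real_inner_le_norm (x i) (x j))
      rw [norm_x, norm_x, mul_one] at this
      exact cos_arccos this.1 this.2
    refine (hasSum_sum fun i _ ↦ hasSum_sum fun j _ ↦ (hg _ ⟨arccos_nonneg ⟪x i, x j⟫,
      arccos_le_pi _⟩).mul_left (c i * c j)).congr_fun fun n ↦ ?_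
    simp only [q, Finset.mul_sum, cos_arccos_inner]
    exact Finset.sum_congr rfl fun i _ ↦ Finset.sum_congr rfl fun j _ ↦ by ring
  have q_nonneg (n : ℕ) : 0 ≤ q n := by
    have inner_eq (i j : Fin N) : ⟪x i, x j⟫ = (x i).ofLp ⬝ᵥ (x j).ofLp := by
      rw [EuclideanSpace.inner_eq_star_dotProduct, star_trivial, dotProduct_comm]
    simp only [q, inner_eq]
    exact sum_gegenbauer_dotProduct_nonneg hα (by simpa using hd)
      (fun i ↦ (inner_eq i i).symm.trans (inner_self i)) c n
  obtain ⟨n, hn⟩ : ∃ n, q n ≠ 0 := by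
    by_contra! h
    exact hc (eq_zero_of_sum_gegenbauer_eq_zero hα inner_self inner_ne_one h)
  exact (mul_pos (hb n) ((q_nonneg n).lt_of_ne' hn)).trans_le
    (le_hasSum hasSum_q n fun m _ ↦ mul_nonneg (hb m).le (q_nonneg m))

theorem strictPosDefOnSphere_truncated_pow (L : ℕ) {x : ℝ} (hx : x ∈ Ioc 0 π) :
    StrictPosDefOnSphere (2 * L + 4) fun θ ↦ max (x - θ) 0 ^ (L + 2) / (L + 2).factorial := by
  let K : ℝ := π / (4 ^ (L + 1) * (L + 1).factorial ^ 2)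
  have hK : 0 < K := by positivity
  refine strictPosDefOnSphere_of_hasSum_gegenbauer (α := L + 1) (by positivity)
    (by push_cast; ring) (b := fun n ↦
      K⁻¹ * ((n + (L + 1)) / (L + 1) * gegenbauerCoeff (L + 3) (L + 1) n x)) (fun n ↦ ?_)
    fun θ hθ ↦ ?_
  · have := gegenbauerCoeff_pos L n hx.1
    positivity
  · have := hasSum_zonalKernel_truncated_pow (le_refl (L + 1)) (Ioc_subset_Icc_self hx) hθ
    rw [mul_div_right_comm] at this
    refine (inv_mul_cancel_left₀ hK.ne' _ ▸ this.mul_left K⁻¹).congr_fun fun n ↦ ?_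
    rw [zonalKernel]
    ring

end TruncatedPowers

section Mixtures

theorem StrictPosDefOnSphere.of_le {d d' : ℕ} {g : ℝ → ℝ} (hg : StrictPosDefOnSphere d' g)
    (h : d ≤ d') : StrictPosDefOnSphere d g := by
  let b := EuclideanSpace.basisFun (Fin d) ℝ
  let b' := EuclideanSpace.basisFun (Fin d') ℝ
  let e : EuclideanSpace ℝ (Fin d) →ₗᵢ[ℝ] EuclideanSpace ℝ (Fin d') :=
    (b.toBasis.constr ℝ (b' ∘ Fin.castLE h)).isometryOfOrthonormal (v := b.toBasis)
      (by simp)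
      (by simpa [Function.comp_def] using b'.orthonormal.comp _ (Fin.castLE_injective h))
  intro N x norm_x x_inj
  simpa using hg N (e ∘ x) (by simpa using norm_x) (e.injective.comp x_inj)

theorem strictPosDefOnSphere_of_mixture {d : ℕ} {X : Type*} [MeasurableSpace X] {μ : Measure X}
    (hμ : μ ≠ 0) {ψ : X → ℝ → ℝ} (hψ : ∀ᵐ x ∂μ, StrictPosDefOnSphere d (ψ x)) {g : ℝ → ℝ}
    (hint : ∀ θ ∈ Icc 0 π, Integrable (fun x ↦ ψ x θ) μ)
    (hg : ∀ θ ∈ Icc 0 π, g θ = ∫ x, ψ x θ ∂μ) : StrictPosDefOnSphere d g := by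
  refine strictPosDefOnSphere_iff.2 fun N x norm_x x_inj c hc ↦ ?_
  have arccos_mem (i j : Fin N) : arccos ⟪x i, x j⟫ ∈ Icc 0 π := ⟨arccos_nonneg _, arccos_le_pi _⟩
  let Q := fun y ↦ ∑ i, ∑ j, c i * c j * ψ y (arccos ⟪x i, x j⟫)
  have integrable_term (i j : Fin N) :
      Integrable (fun y ↦ c i * c j * ψ y (arccos ⟪x i, x j⟫)) μ :=
    (hint _ (arccos_mem i j)).const_mul _
  have integrable_row (i : Fin N) := integrable_finsetSum Finset.univ fun j _ ↦ integrable_term i j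
  have integrable_Q : Integrable Q μ := integrable_finsetSum _ fun i _ ↦ integrable_row i
  have sum_eq : ∑ i, ∑ j, c i * c j * g (arccos ⟪x i, x j⟫) = ∫ y, Q y ∂μ := by
    simp only [Q, integral_finsetSum _ fun i _ ↦ integrable_row i,
      integral_finsetSum _ fun j _ ↦ integrable_term _ j, integral_const_mul, hg _ (arccos_mem _ _)]
  have Q_pos : ∀ᵐ y ∂μ, 0 < Q y := hψ.mono fun y hy ↦
    strictPosDefOnSphere_iff.1 hy N x norm_x x_inj c hc
  have support_ae : Function.support Q =ᵐ[μ] univ :=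
    Filter.eventuallyEq_univ.2 (Q_pos.mono fun y hy ↦ hy.ne')
  rw [sum_eq, integral_pos_iff_support_of_nonneg_ae (Q_pos.mono fun y hy ↦ hy.le) integrable_Q,
    measure_congr support_ae]
  exact Measure.measure_univ_pos.2 hμ

end Mixtures

section Layers

/-- The set of points of `(0, b)` at which `k` exceeds the level `s`. -/
def layer (k : ℝ → ℝ) (b s : ℝ) : Set ℝ :=
  {t | s < k t} ∩ Ioo 0 b

lemma volume_layer_ne_top (k : ℝ → ℝ) (b s : ℝ) : volume (layer k b s) ≠ ⊤ :=
  measure_ne_top_of_subset inter_subset_right measure_Ioo_lt_top.ne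

lemma antitone_volume_real_layer (k : ℝ → ℝ) (b : ℝ) :
    Antitone fun s ↦ volume.real (layer k b s) := fun s _ hs ↦
  measureReal_mono (inter_subset_inter_left _ fun _ ht ↦ hs.trans_lt ht) (volume_layer_ne_top k b s)

lemma volume_real_layer_mem_Icc (k : ℝ → ℝ) {b : ℝ} (hb : 0 ≤ b) (s : ℝ) :
    volume.real (layer k b s) ∈ Icc 0 b :=
  ⟨measureReal_nonneg,
    (measureReal_mono inter_subset_right measure_Ioo_lt_top.ne).trans_eq (by simp [hb])⟩

lemma layer_ae_eq_Ioo {k : ℝ → ℝ} {b : ℝ} (hk : AntitoneOn k (Ioo 0 b)) (s : ℝ) :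
    layer k b s =ᵐ[volume] Ioo 0 (volume.real (layer k b s)) := by
  have Ioc_subset {t : ℝ} (ht : t ∈ layer k b s) : Ioc 0 t ⊆ layer k b s := fun u hu ↦
    have hu' : u ∈ Ioo 0 b := ⟨hu.1, hu.2.trans_lt ht.2.2⟩
    ⟨ht.1.trans_le (hk hu' ht.2 hu.2), hu'⟩
  have layer_subset : layer k b s ⊆ Ioc 0 (volume.real (layer k b s)) := fun t ht ↦ by
    have := measureReal_mono (μ := volume) (Ioc_subset ht) (volume_layer_ne_top k b s)
    exact ⟨ht.2.1, by simpa [ht.2.1.le] using this⟩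
  have subset_layer : Ioo 0 (volume.real (layer k b s)) ⊆ layer k b s := fun u hu ↦ by
    by_contra hu'
    have layer_subset_Ioo : layer k b s ⊆ Ioo 0 u := fun t ht ↦
      ⟨ht.2.1, not_le.1 fun hut ↦ hu' (Ioc_subset ht ⟨hu.1, hut⟩)⟩
    have := measureReal_mono (μ := volume) layer_subset_Ioo measure_Ioo_lt_top.ne
    rw [volume_real_Ioo_of_le hu.1.le, sub_zero] at this
    exact hu.2.not_ge this
  exact (layer_subset.eventuallyLE.trans Ioo_ae_eq_Ioc.symm.le).antisymm subset_layer.eventuallyLE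

-- The layers of `k` are initial intervals of `(0, b)`; `μ` is the distribution of their lengths
-- under Lebesgue measure on the levels.
theorem exists_measure_lintegral_mul_antitoneOn {k : ℝ → ℝ} {b : ℝ} (hb : 0 ≤ b)
    (hk : AntitoneOn k (Ioo 0 b)) (hk₀ : ∀ t ∈ Ioo 0 b, 0 ≤ k t) :
    ∃ μ : Measure ℝ, (∀ᵐ x ∂μ, x ∈ Ioc 0 b) ∧ ∀ φ : ℝ → ENNReal, Measurable φ →
      ∫⁻ t in Ioo 0 b, φ t * .ofReal (k t) = ∫⁻ x, (∫⁻ t in Ioo 0 x, φ t) ∂μ := by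
  let l := fun s ↦ volume.real (layer k b s)
  have l_meas : Measurable l := (antitone_volume_real_layer k b).measurable
  let μ₀ := (volume.restrict (Ioi 0)).map l
  refine ⟨μ₀.restrict (Ioi 0), ?_, fun φ hφ ↦ ?_⟩
  · have : ∀ᵐ x ∂μ₀, x ∈ Icc 0 b :=
      (ae_map_iff l_meas.aemeasurable measurableSet_Icc).2
        (.of_forall (volume_real_layer_mem_Icc k hb))
    filter_upwards [ae_restrict_of_ae this, ae_restrict_mem measurableSet_Ioi] with x hx hx'
    exact ⟨hx', hx.2⟩
  have k_meas := aemeasurable_restrict_of_antitoneOn (μ := volume) measurableSet_Ioo hk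
  let ν := (volume.restrict (Ioo 0 b)).withDensity φ
  have ν_ac : ν ≪ volume.restrict (Ioo 0 b) := withDensity_absolutelyContinuous _ _
  have Φ_mono : Monotone fun x ↦ ∫⁻ t in Ioo 0 x, φ t := fun x y hxy ↦
    lintegral_mono_set (Ioo_subset_Ioo_right hxy)
  calc ∫⁻ t in Ioo 0 b, φ t * .ofReal (k t)
      = ∫⁻ t, .ofReal (k t) ∂ν :=
        (lintegral_withDensity_eq_lintegral_mul₀ hφ.aemeasurable k_meas.ennreal_ofReal).symm
    _ = ∫⁻ s in Ioi 0, ν {t | s < k t} :=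
        lintegral_eq_lintegral_meas_lt ν
          (ν_ac.ae_le ((ae_restrict_mem measurableSet_Ioo).mono hk₀)) (k_meas.mono_ac ν_ac)
    _ = ∫⁻ s in Ioi 0, (∫⁻ t in Ioo 0 (l s), φ t) := by
        refine lintegral_congr fun s ↦ ?_
        rw [withDensity_apply', Measure.restrict_restrict' measurableSet_Ioo]
        exact setLIntegral_congr (layer_ae_eq_Ioo hk s)
    _ = ∫⁻ x, (∫⁻ t in Ioo 0 x, φ t) ∂μ₀ := (lintegral_map Φ_mono.measurable l_meas).symm
    _ = ∫⁻ x in Ioi 0, (∫⁻ t in Ioo 0 x, φ t) ∂μ₀ :=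
        (setLIntegral_eq_of_support_subset fun x ↦ not_imp_comm.1 fun hx ↦ by
          simp [Ioo_eq_empty (mem_Ioi.not.1 hx)]).symm

end Layers

section Williamson

lemma hasDerivWithinAt_Ioi_taylorWithinEval {E : Type*} [NormedAddCommGroup E] [NormedSpace ℝ E]
    {f : ℝ → E} {a b t : ℝ} {n : ℕ} {f' : E} (ht : t ∈ Ioo a b)
    (hf : ContDiffOn ℝ n f (Icc a b))
    (hf' : HasDerivWithinAt (iteratedDerivWithin n f (Icc a b)) f' (Ioi t) t) (x : ℝ) :
    HasDerivWithinAt (fun y ↦ taylorWithinEval f n (Icc a b) y x)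
      (((x - t) ^ n / n.factorial) • f') (Ioi t) t := by
  have hab := ht.1.trans ht.2
  cases n with
  | zero => simpa using hf'
  | succ n =>
    have taylor_n := taylorWithinEval_hasDerivAt_Ioo x hab ht (n := n)
      (hf.of_le (by exact_mod_cast n.le_succ))
      ((hf.differentiableOn_iteratedDerivWithin (by exact_mod_cast n.lt_succ_self)
        (uniqueDiffOn_Icc hab)).mono
          Ioo_subset_Icc_self)
    have coeff := (monomial_has_deriv_aux t x n).const_mul (((n : ℝ) + 1) * n.factorial)⁻¹
    simp only [taylorWithinEval_succ]
    refine (taylor_n.hasDerivWithinAt.add (coeff.hasDerivWithinAt.smul hf')).congr_deriv ?_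
    rw [Nat.factorial_succ]
    push_cast
    match_scalars <;> field_simp
    simp

lemma setLIntegral_truncated_pow_mul {n : ℕ} (hn : n ≠ 0) {a θ : ℝ} (hθ : a ≤ θ) (b : ℝ)
    (w : ℝ → ENNReal) :
    ∫⁻ t in Ioo a b, .ofReal (max (t - θ) 0 ^ n / n.factorial) * w t =
      ∫⁻ t in Ioo θ b, .ofReal ((t - θ) ^ n / n.factorial) * w t := by
  have inter_eq : Ioi θ ∩ Ioo a b = Ioo θ b := by
    ext t
    simp only [mem_inter_iff, mem_Ioi, mem_Ioo]
    exact ⟨fun h ↦ ⟨h.1, h.2.2⟩, fun h ↦ ⟨h.1, hθ.trans_lt h.1, h.2⟩⟩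
  rw [← setLIntegral_eq_of_support_subset (s := Ioi θ), Measure.restrict_restrict measurableSet_Ioi,
    inter_eq]
  · exact setLIntegral_congr_fun measurableSet_Ioo fun t ht ↦ by
      simp only [max_eq_left (sub_nonneg.2 ht.1.le)]
  · exact fun t ↦ not_imp_comm.1 fun ht ↦ by
      simp [max_eq_right (sub_nonpos.2 (not_lt.1 (mem_Ioi.not.1 ht))), hn]

lemma setLIntegral_truncated_pow {n : ℕ} (hn : n ≠ 0) {a θ : ℝ} (hθ : a ≤ θ) (x : ℝ) :
    ∫⁻ t in Ioo a x, .ofReal (max (t - θ) 0 ^ n / n.factorial) =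
      .ofReal (max (x - θ) 0 ^ (n + 1) / (n + 1).factorial) := by
  have := setLIntegral_truncated_pow_mul hn hθ x 1
  simp only [Pi.one_apply, mul_one] at this
  rw [this]
  rcases le_total x θ with hx | hx
  · simp [Ioo_eq_empty hx.not_gt, max_eq_right (sub_nonpos.2 hx)]
  · rw [restrict_Ioo_eq_restrict_Ioc, ← ofReal_integral_eq_lintegral_ofReal,
      ← intervalIntegral.integral_of_le hx, max_eq_left (sub_nonneg.2 hx),
      intervalIntegral.integral_div, intervalIntegral.integral_comp_sub_right (· ^ n), integral_pow,
      Nat.factorial_succ]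
    · push_cast
      simp
      field_simp
    · exact Continuous.integrableOn_Ioc (by fun_prop)
    · refine (ae_restrict_mem measurableSet_Ioc).mono fun t ht ↦ ?_
      have := sub_nonneg.2 ht.1.le
      positivity

lemma ofReal_eq_setLIntegral_taylor_remainder {f k : ℝ → ℝ} {b : ℝ} {n : ℕ} (hb : 0 < b)
    (hf : ContDiffOn ℝ n f (Icc 0 b))
    (hvanish : ∀ j ≤ n, iteratedDerivWithin j f (Icc 0 b) b = 0)
    (hk : ∀ t ∈ Ioo 0 b,
      HasDerivWithinAt (iteratedDerivWithin n f (Icc 0 b)) ((-1) ^ (n + 1) * k t) (Ioi t) t)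
    (hk₀ : ∀ t ∈ Ioo 0 b, 0 ≤ k t) {θ : ℝ} (hθ : θ ∈ Icc 0 b) :
    0 ≤ f θ ∧ .ofReal (f θ) =
      ∫⁻ t in Ioo θ b, .ofReal ((t - θ) ^ n / n.factorial) * .ofReal (k t) := by
  let F := fun t ↦ -taylorWithinEval f n (Icc 0 b) t θ
  let F' := fun t ↦ (t - θ) ^ n / n.factorial * k t
  have F_θ : F θ = - f θ := by simp [F, taylorWithinEval_self]
  have F_b : F b = 0 := by
    simp only [F, taylor_within_apply, neg_eq_zero]
    exact Finset.sum_eq_zero fun j hj ↦ by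
      rw [hvanish j (Finset.mem_range_succ_iff.1 hj), smul_zero]
  have F_cont : ContinuousOn F (Icc θ b) :=
    (continuousOn_taylorWithinEval (uniqueDiffOn_Icc hb) hf).neg.mono (Icc_subset_Icc_left hθ.1)
  have F_deriv : ∀ t ∈ Ioo θ b, HasDerivWithinAt F (F' t) (Ioi t) t := fun t ht ↦ by
    have ht' : t ∈ Ioo 0 b := ⟨hθ.1.trans_lt ht.1, ht.2⟩
    refine (hasDerivWithinAt_Ioi_taylorWithinEval ht' hf (hk t ht') θ).neg.congr_deriv ?_
    have sub_pow : (θ - t) ^ n = (-1) ^ n * (t - θ) ^ n := by rw [← mul_pow]; ring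
    have sign : (-1 : ℝ) ^ n * (-1) ^ n = 1 := by rw [← mul_pow]; simp
    simp only [F', smul_eq_mul, sub_pow]
    linear_combination (t - θ) ^ n / n.factorial * k t * sign
  have F'_nonneg : ∀ t ∈ Ioo θ b, 0 ≤ F' t := fun t ht ↦ by
    have := sub_nonneg.2 ht.1.le
    exact mul_nonneg (by positivity) (hk₀ t ⟨hθ.1.trans_lt ht.1, ht.2⟩)
  have F'_int := intervalIntegral.integrableOn_deriv_right_of_nonneg F_cont F_deriv F'_nonneg
  have integral_F' : ∫ t in Ioo θ b, F' t = f θ := by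
    rw [← integral_Ioc_eq_integral_Ioo, ← intervalIntegral.integral_of_le hθ.2,
      intervalIntegral.integral_eq_sub_of_hasDeriv_right_of_le hθ.2 F_cont F_deriv
        ((intervalIntegrable_iff_integrableOn_Ioc_of_le hθ.2).2 F'_int),
      F_b, F_θ, zero_sub, neg_neg]
  refine ⟨integral_F' ▸ setIntegral_nonneg measurableSet_Ioo F'_nonneg, ?_⟩
  rw [← integral_F', ofReal_integral_eq_lintegral_ofReal (F'_int.mono_set Ioo_subset_Ioc_self)
    ((ae_restrict_mem measurableSet_Ioo).mono F'_nonneg)]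
  refine setLIntegral_congr_fun measurableSet_Ioo fun t ht ↦ ENNReal.ofReal_mul ?_
  have := sub_nonneg.2 ht.1.le
  positivity

lemma rightDeriv_nonpos_of_convexOn {h : ℝ → ℝ} {a b t : ℝ} (hh : ConvexOn ℝ (Icc a b) h)
    (hb : h b = 0) (ht : t ∈ Ioo a b) (hht : 0 ≤ h t) : derivWithin h (Ioi t) t ≤ 0 :=
  calc derivWithin h (Ioi t) t ≤ slope h t b :=
        hh.rightDeriv_le_slope_of_mem_interior (by rwa [interior_Icc])
          (right_mem_Icc.2 (ht.1.trans ht.2).le) ht.2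
    _ ≤ 0 := by
        rw [slope_def_field, hb]
        exact div_nonpos_of_nonpos_of_nonneg (by linarith) (sub_nonneg.2 ht.2.le)

theorem exists_measure_eq_integral_truncated_pow {g : ℝ → ℝ} {b : ℝ} (hb : 0 < b) {n : ℕ}
    (hn : n ≠ 0) (hg : ContDiffOn ℝ n g (Icc 0 b))
    (hconvex : ConvexOn ℝ (Icc 0 b) fun θ ↦ (-1) ^ n * iteratedDerivWithin n g (Icc 0 b) θ)
    (hnonneg : ∀ θ ∈ Icc 0 b, 0 ≤ (-1) ^ n * iteratedDerivWithin n g (Icc 0 b) θ)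
    (hvanish : ∀ j ≤ n, iteratedDerivWithin j g (Icc 0 b) b = 0) :
    ∃ μ : Measure ℝ, (∀ᵐ x ∂μ, x ∈ Ioc 0 b) ∧ ∀ θ ∈ Icc 0 b,
      Integrable (fun x ↦ max (x - θ) 0 ^ (n + 1) / (n + 1).factorial) μ ∧
      g θ = ∫ x, max (x - θ) 0 ^ (n + 1) / (n + 1).factorial ∂μ := by
  let h := fun θ ↦ (-1) ^ n * iteratedDerivWithin n g (Icc 0 b) θ
  let k := fun t ↦ -derivWithin h (Ioi t) t
  have hk : AntitoneOn k (Ioo 0 b) :=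
    interior_Icc (a := (0 : ℝ)) ▸ hconvex.monotoneOn_rightDeriv.neg
  have k_nonneg (t : ℝ) (ht : t ∈ Ioo 0 b) : 0 ≤ k t :=
    neg_nonneg.2 (rightDeriv_nonpos_of_convexOn hconvex
      (mul_eq_zero_of_right _ (hvanish n le_rfl)) ht (hnonneg t (Ioo_subset_Icc_self ht)))
  have deriv_right (t : ℝ) (ht : t ∈ Ioo 0 b) :
      HasDerivWithinAt (iteratedDerivWithin n g (Icc 0 b)) ((-1) ^ (n + 1) * k t) (Ioi t) t := by
    have iteratedDeriv_eq : iteratedDerivWithin n g (Icc 0 b) = fun θ ↦ (-1) ^ n * h θ :=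
      funext fun θ ↦ by simp [h, ← mul_assoc, ← mul_pow]
    have h_deriv := hconvex.hasDerivWithinAt_rightDeriv_of_mem_interior (by rwa [interior_Icc])
    rw [iteratedDeriv_eq]
    exact (h_deriv.const_mul ((-1) ^ n)).congr_deriv (by simp only [k]; ring)
  obtain ⟨μ, μ_Ioc, hμ⟩ := exists_measure_lintegral_mul_antitoneOn hb.le hk k_nonneg
  refine ⟨μ, μ_Ioc, fun θ hθ ↦ ?_⟩
  obtain ⟨gθ_nonneg, gθ_eq⟩ := ofReal_eq_setLIntegral_taylor_remainder hb hg hvanish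
    deriv_right k_nonneg hθ
  let ψ := fun x ↦ max (x - θ) 0 ^ (n + 1) / (n + 1).factorial
  have ψ_nonneg : 0 ≤ᵐ[μ] ψ := .of_forall fun x ↦ by positivity
  have ψ_meas : AEStronglyMeasurable ψ μ := Continuous.aestronglyMeasurable (by fun_prop)
  have lintegral_ψ : ∫⁻ x, .ofReal (ψ x) ∂μ = .ofReal (g θ) := by
    rw [gθ_eq, ← setLIntegral_truncated_pow_mul hn hθ.1, hμ _ (by fun_prop)]
    exact lintegral_congr fun x ↦ (setLIntegral_truncated_pow hn hθ.1 x).symm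
  refine ⟨(lintegral_ofReal_ne_top_iff_integrable ψ_meas ψ_nonneg).1 ?_, ?_⟩
  · exact lintegral_ψ ▸ ENNReal.ofReal_ne_top
  · rw [integral_eq_lintegral_of_nonneg_ae ψ_nonneg ψ_meas, lintegral_ψ,
      ENNReal.toReal_ofReal gθ_nonneg]

end Williamson

section Polya

lemma nonneg_of_convexOn_of_hasDerivWithinAt_zero {h : ℝ → ℝ} {a b : ℝ}
    (hh : ConvexOn ℝ (Icc a b) h) (hb : h b = 0) (hb' : HasDerivWithinAt h 0 (Icc a b) b) {t : ℝ}
    (ht : t ∈ Icc a b) : 0 ≤ h t := by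
  rcases ht.2.eq_or_lt with rfl | htb
  · exact hb.ge
  · have slope_nonpos := hh.slope_le_of_hasDerivWithinAt ht (right_mem_Icc.2 (ht.1.trans ht.2))
      htb hb'
    rw [slope_def_field, hb, zero_sub, div_le_iff₀ (sub_pos.2 htb), zero_mul] at slope_nonpos
    exact neg_nonpos.1 slope_nonpos

lemma exists_ne_zero_of_iteratedDerivWithin_not_affine {f : ℝ → ℝ} {s : Set ℝ} {n : ℕ}
    (h : ¬ ∃ a b : ℝ, ∀ x ∈ s, iteratedDerivWithin n f s x = a * x + b) : ∃ x ∈ s, f x ≠ 0 := by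
  by_contra! f_zero
  exact h ⟨0, 0, fun x hx ↦ by
    simpa using iteratedDerivWithin_congr (n := n) (g := fun _ ↦ 0) f_zero hx⟩

lemma ne_zero_and_le_of_eq_ceil {d n : ℕ} (hd : 3 ≤ d)
    (hn : (n : ℤ) = ⌈((d : ℝ) - 2) / 2⌉) : n ≠ 0 ∧ d ≤ 2 * n + 2 := by
  have le_ceil := hn ▸ Int.le_ceil (((d : ℝ) - 2) / 2)
  have d_le : d ≤ 2 * n + 2 := by
    have : (d : ℝ) ≤ 2 * n + 2 := by push_cast at le_ceil; linarith
    exact_mod_cast this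
  exact ⟨by lia, d_le⟩

theorem polya_criterion_strict_pos_def_general {d lam : ℕ} (hlam : lam ≠ 0) (hd : d ≤ 2 * lam + 2)
    {g : ℝ → ℝ} (hg : ContDiffOn ℝ lam g (Icc 0 π))
    (hconvex : ConvexOn ℝ (Icc 0 π) fun θ ↦ (-1) ^ lam * iteratedDerivWithin lam g (Icc 0 π) θ)
    (hnonneg : ∀ θ ∈ Icc 0 π, 0 ≤ (-1) ^ lam * iteratedDerivWithin lam g (Icc 0 π) θ)
    (hvanish : ∀ j ≤ lam, iteratedDerivWithin j g (Icc 0 π) π = 0)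
    (hne : ∃ θ ∈ Icc 0 π, g θ ≠ 0) : StrictPosDefOnSphere d g := by
  obtain ⟨L, rfl⟩ := Nat.exists_eq_succ_of_ne_zero hlam
  obtain ⟨μ, μ_Ioc, hμ⟩ := exists_measure_eq_integral_truncated_pow pi_pos hlam hg hconvex hnonneg
    hvanish
  have μ_ne_zero : μ ≠ 0 := by
    rintro rfl
    obtain ⟨θ, hθ, gθ_ne⟩ := hne
    exact gθ_ne ((hμ θ hθ).2.trans (integral_zero_measure _))
  have truncated_pow : ∀ᵐ x ∂μ, StrictPosDefOnSphere d fun θ ↦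
      max (x - θ) 0 ^ (L + 2) / (L + 2).factorial :=
    μ_Ioc.mono fun x hx ↦ (strictPosDefOnSphere_truncated_pow L hx).of_le hd
  exact strictPosDefOnSphere_of_mixture μ_ne_zero truncated_pow (fun θ hθ ↦ (hμ θ hθ).1)
    fun θ hθ ↦ (hμ θ hθ).2

end Polya

theorem polya_criterion_strict_pos_def (d : ℕ) (hd : 3 ≤ d) (lam : ℕ)
    (hlam : (lam : ℤ) = ⌈((d : ℝ) - 2) / 2⌉) (g : ℝ → ℝ)
    (hg : ContDiffOn ℝ lam g (Set.Icc 0 π))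
    (hconvex : ConvexOn ℝ (Set.Icc 0 π)
      (fun θ => (-1 : ℝ) ^ lam * iteratedDerivWithin lam g (Set.Icc 0 π) θ))
    (hvanish : ∀ j ≤ lam, iteratedDerivWithin j g (Set.Icc 0 π) π = 0)
    (hleft : HasDerivWithinAt (iteratedDerivWithin lam g (Set.Icc 0 π)) 0 (Set.Icc 0 π) π)
    (hright : ∃ L : ℝ,
      HasDerivWithinAt (iteratedDerivWithin lam g (Set.Icc 0 π)) L (Set.Icc 0 π) 0)
    (hnotaffine : ¬ ∃ a b : ℝ, ∀ θ ∈ Set.Icc (0:ℝ) π,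
      iteratedDerivWithin lam g (Set.Icc 0 π) θ = a * θ + b) :
    StrictPosDefOnSphere d g := by
  obtain ⟨lam_ne_zero, d_le⟩ := ne_zero_and_le_of_eq_ceil hd hlam
  exact polya_criterion_strict_pos_def_general lam_ne_zero d_le hg hconvex
    (fun _ ↦ nonneg_of_convexOn_of_hasDerivWithinAt_zero hconvex
      (mul_eq_zero_of_right _ (hvanish lam le_rfl)) (by simpa using hleft.const_mul ((-1) ^ lam)))
    hvanish (exists_ne_zero_of_iteratedDerivWithin_not_affine hnotaffine)
end

section
/- Let α, β ∈ ℕ (nonnegative integers) with max{α, β} > 0, let δ be a real number with δ ≥ α + 1, and let t ∈ (0, π]. Then the series Σ_{n=0}^∞ (F_n^{(α,β),δ}(t)/h_n) P_n^{(α-1/2,β-1/2)}(1) converges, where h_n = 2^{-α-β+1} ∫_{-1}^1 [P_n^{(α-1/2,β-1/2)}(x)]² (1-x)^{α-1/2} (1+x)^{β-1/2} dx. (These are the terms of the Fourier–Jacobi expansion of θ ↦ (t-θ)_+^δ evaluated at θ = 0.) -/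
open MeasureTheory Real Set

/-- Generalized binomial coefficient `C(u, v) = Γ(u+1) / (Γ(v+1) Γ(u-v+1))`. -/
noncomputable def genBinom (u v : ℝ) : ℝ :=
  Real.Gamma (u + 1) / (Real.Gamma (v + 1) * Real.Gamma (u - v + 1))

/-- Jacobi polynomial `P_n^{(a,b)}(x)`. -/
noncomputable def jacobiP (n : ℕ) (a b x : ℝ) : ℝ :=
  ∑ k ∈ Finset.range (n + 1),
    genBinom ((n : ℝ) + a) ((n : ℝ) - (k : ℝ)) * genBinom ((n : ℝ) + b) (k : ℝ) *
      ((x - 1) / 2) ^ k * ((x + 1) / 2) ^ (n - k)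

/-- `F_n^{(α,β),δ}(t)`. -/
noncomputable def FJ (n : ℕ) (α β δ t : ℝ) : ℝ :=
  ∫ θ in (0:ℝ)..t, (t - θ) ^ δ * jacobiP n (α - 1/2) (β - 1/2) (Real.cos θ) *
    (Real.sin (θ / 2)) ^ (2 * α) * (Real.cos (θ / 2)) ^ (2 * β)

/-- Normalization constant `h_n` of the Jacobi polynomials. -/
noncomputable def hJ (n : ℕ) (α β : ℝ) : ℝ :=
  (2:ℝ) ^ (-α - β + 1) *
    ∫ x in (-1:ℝ)..1, (jacobiP n (α - 1/2) (β - 1/2) x) ^ 2 *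
      (1 - x) ^ (α - 1/2) * (1 + x) ^ (β - 1/2)

/-!
Integration by parts against the Jacobi weight trades `P_n^{(a,b)}` for `P_{n-1}^{(a+1,b+1)}` and
gains a factor `1 / n`. Applied to `(t - θ)₊ ^ δ`, it can be repeated `r` times as long as `r ≤ δ`
and `r < a + 2`, and leaves functions that are square-integrable after division by the weight; by
Bessel's inequality the coefficients `c_n` satisfy `∑ n ^ (2 * r) * c_n ^ 2 / h_n < ∞`. Since
`P_n(1) ^ 2 / h_n` grows like `n ^ (2 * a + 1)`, also `∑ n ^ (-2 * r) * P_n(1) ^ 2 / h_n < ∞` as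
soon as `a + 1 < r`, and by Cauchy–Schwarz the series `∑ c_n * P_n(1) / h_n` converges absolutely.
-/

section JacobiPolynomial

open Finset

lemma genBinom_zero_right {u : ℝ} (hu : 0 < u + 1) : genBinom u 0 = 1 := by
  have := (Gamma_pos_of_pos hu).ne'
  simp [genBinom, this]

lemma add_one_mul_genBinom_add_one {u v : ℝ} (hv : v + 1 ≠ 0) (huv : u - v ≠ 0) :
    (v + 1) * genBinom u (v + 1) = (u - v) * genBinom u v := by
  have hΓ : u - (v + 1) + 1 = u - v := by ring
  rw [genBinom, genBinom, hΓ, Gamma_add_one hv, Gamma_add_one huv]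
  field_simp

lemma jacobiP_eq_sum_antidiagonal (n : ℕ) (a b x : ℝ) :
    jacobiP n a b x = ∑ p ∈ antidiagonal n,
      genBinom (n + a) p.2 * genBinom (n + b) p.1 * ((x - 1) / 2) ^ p.1 * ((x + 1) / 2) ^ p.2 := by
  rw [jacobiP, Nat.sum_antidiagonal_eq_sum_range_succ fun i j : ℕ ↦
    genBinom (n + a) j * genBinom (n + b) i * ((x - 1) / 2) ^ i * ((x + 1) / 2) ^ j]
  refine sum_congr rfl fun k hk ↦ ?_
  rw [Nat.cast_sub (mem_range_succ_iff.1 hk)]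

lemma hasDerivAt_jacobiP_sum (n : ℕ) (a b x : ℝ) :
    HasDerivAt (jacobiP n a b)
      (∑ p ∈ antidiagonal n, genBinom (n + a) p.2 * genBinom (n + b) p.1 *
        ((p.1 * ((x - 1) / 2) ^ (p.1 - 1) * ((x + 1) / 2) ^ p.2 +
          p.2 * ((x - 1) / 2) ^ p.1 * ((x + 1) / 2) ^ (p.2 - 1)) / 2)) x := by
  rw [funext (jacobiP_eq_sum_antidiagonal n a b)]
  refine HasDerivAt.fun_sum fun p _ ↦ ?_
  have hsub : HasDerivAt (fun x : ℝ ↦ (x - 1) / 2) (1 / 2) x :=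
    ((hasDerivAt_id x).sub_const 1).div_const 2
  have hadd : HasDerivAt (fun x : ℝ ↦ (x + 1) / 2) (1 / 2) x :=
    ((hasDerivAt_id x).add_const 1).div_const 2
  refine (((hsub.fun_pow p.1).const_mul _).fun_mul (hadd.fun_pow p.2)).congr_deriv ?_
  ring

lemma differentiable_jacobiP (n : ℕ) (a b : ℝ) : Differentiable ℝ (jacobiP n a b) :=
  fun x ↦ (hasDerivAt_jacobiP_sum n a b x).differentiableAt

lemma continuous_jacobiP (n : ℕ) (a b : ℝ) : Continuous (jacobiP n a b) :=
  (differentiable_jacobiP n a b).continuous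

lemma jacobiP_zero {a b : ℝ} (ha : -1 < a) (hb : -1 < b) (x : ℝ) : jacobiP 0 a b x = 1 := by
  simp [jacobiP, genBinom_zero_right (show 0 < a + 1 by linarith),
    genBinom_zero_right (show 0 < b + 1 by linarith)]

lemma jacobiP_one_right (n : ℕ) (a : ℝ) {b : ℝ} (hb : -1 < b) :
    jacobiP n a b 1 = Gamma (n + a + 1) / (n.factorial * Gamma (a + 1)) := by
  have hnb : 0 < (n : ℝ) + b + 1 := by linarith [n.cast_nonneg (α := ℝ)]
  rw [jacobiP, sum_eq_single 0 (fun k _ hk ↦ by simp [hk]) (by simp)]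
  have := (Gamma_pos_of_pos hnb).ne'
  simp [genBinom, Gamma_nat_eq_factorial, div_self this]

variable {a b : ℝ}

lemma add_one_mul_genBinom_nat_add_one (i j : ℕ) (ha : -1 < a) :
    ((i : ℝ) + 1) * genBinom (i + j + 1 + a) (i + 1) =
      (j + a + 1) * genBinom (i + j + (a + 1)) i := by
  have hu : (i : ℝ) + j + (a + 1) - i = j + a + 1 := by ring
  have := add_one_mul_genBinom_add_one (u := i + j + (a + 1)) (v := i) (by positivity)
    (hu ▸ by linarith [j.cast_nonneg (α := ℝ)])
  rw [hu] at this
  rwa [show (i : ℝ) + j + 1 + a = i + j + (a + 1) by ring]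

lemma hasDerivAt_jacobiP_succ (ha : -1 < a) (hb : -1 < b) (n : ℕ) (x : ℝ) :
    HasDerivAt (jacobiP (n + 1) a b) ((n + a + b + 2) / 2 * jacobiP n (a + 1) (b + 1) x) x := by
  refine (hasDerivAt_jacobiP_sum (n + 1) a b x).congr_deriv ?_
  simp only [add_div, mul_add, sum_add_distrib]
  rw [Nat.sum_antidiagonal_succ, Nat.sum_antidiagonal_succ', jacobiP_eq_sum_antidiagonal]
  simp only [Nat.cast_zero, zero_mul, zero_div, mul_zero, zero_add]
  rw [mul_sum, ← sum_add_distrib]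
  refine sum_congr rfl fun ⟨i, j⟩ hij ↦ ?_
  obtain rfl := mem_antidiagonal.1 hij
  have hi := add_one_mul_genBinom_nat_add_one i j hb
  have hj := add_one_mul_genBinom_nat_add_one j i ha
  simp only [add_comm (j : ℝ) i] at hj
  have hcomm (c : ℝ) : (i : ℝ) + j + 1 + c = i + j + (c + 1) := by ring
  simp only [hcomm] at hi hj
  push_cast
  simp only [hcomm]
  linear_combination ((x - 1) / 2) ^ i * ((x + 1) / 2) ^ j / 2 *
    (genBinom (i + j + (a + 1)) j * hi + genBinom (i + j + (b + 1)) i * hj)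

lemma succ_mul_jacobiP_succ (ha : -1 < a) (hb : -1 < b) (n : ℕ) (x : ℝ) :
    (n + 1) * jacobiP (n + 1) a b x = ∑ p ∈ antidiagonal n,
      genBinom (n + (a + 1)) p.2 * genBinom (n + (b + 1)) p.1 *
        ((p.2 + b + 1) * ((x - 1) / 2) ^ (p.1 + 1) * ((x + 1) / 2) ^ p.2 +
          (p.1 + a + 1) * ((x - 1) / 2) ^ p.1 * ((x + 1) / 2) ^ (p.2 + 1)) := by
  have hsplit : (n + 1) * jacobiP (n + 1) a b x =
      ∑ p ∈ antidiagonal (n + 1), p.1 * (genBinom ((n + 1 : ℕ) + a) p.2 *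
        genBinom ((n + 1 : ℕ) + b) p.1 * ((x - 1) / 2) ^ p.1 * ((x + 1) / 2) ^ p.2) +
      ∑ p ∈ antidiagonal (n + 1), p.2 * (genBinom ((n + 1 : ℕ) + a) p.2 *
        genBinom ((n + 1 : ℕ) + b) p.1 * ((x - 1) / 2) ^ p.1 * ((x + 1) / 2) ^ p.2) := by
    rw [jacobiP_eq_sum_antidiagonal, mul_sum, ← sum_add_distrib]
    refine sum_congr rfl fun p hp ↦ ?_
    have : (p.1 : ℝ) + p.2 = n + 1 := mod_cast mem_antidiagonal.1 hp
    rw [← this]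
    ring
  rw [hsplit, Nat.sum_antidiagonal_succ, Nat.sum_antidiagonal_succ']
  simp only [Nat.cast_zero, zero_mul, zero_add, ← sum_add_distrib]
  refine sum_congr rfl fun ⟨i, j⟩ hij ↦ ?_
  obtain rfl := mem_antidiagonal.1 hij
  have hi := add_one_mul_genBinom_nat_add_one i j hb
  have hj := add_one_mul_genBinom_nat_add_one j i ha
  simp only [add_comm (j : ℝ) i] at hj
  have hcomm (c : ℝ) : (i : ℝ) + j + 1 + c = i + j + (c + 1) := by ring
  simp only [hcomm] at hi hj
  push_cast
  simp only [hcomm]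
  linear_combination ((x - 1) / 2) ^ i * ((x + 1) / 2) ^ j *
    (genBinom (i + j + (a + 1)) j * ((x - 1) / 2) * hi +
      genBinom (i + j + (b + 1)) i * ((x + 1) / 2) * hj)

lemma jacobiP_raising (ha : -1 < a) (hb : -1 < b) (n : ℕ) (x : ℝ) :
    ((b + 1) * (1 - x) - (a + 1) * (1 + x)) * jacobiP n (a + 1) (b + 1) x +
      (1 - x) * (1 + x) * deriv (jacobiP n (a + 1) (b + 1)) x =
        -2 * ((n + 1) * jacobiP (n + 1) a b x) := by
  rw [succ_mul_jacobiP_succ ha hb, (hasDerivAt_jacobiP_sum n (a + 1) (b + 1) x).deriv,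
    jacobiP_eq_sum_antidiagonal, mul_sum, mul_sum, mul_sum, ← sum_add_distrib]
  refine sum_congr rfl fun ⟨i, j⟩ _ ↦ ?_
  have hpow (k : ℕ) (y : ℝ) : k * y ^ (k - 1) * y = k * y ^ k := by
    cases k <;> simp [pow_succ, mul_assoc]
  linear_combination -2 * genBinom (n + (a + 1)) j * genBinom (n + (b + 1)) i *
    (((x + 1) / 2) ^ (j + 1) * hpow i ((x - 1) / 2) +
      ((x - 1) / 2) ^ (i + 1) * hpow j ((x + 1) / 2))

end JacobiPolynomial

section JacobiWeight

/-- The Jacobi weight `(1 - x) ^ A * (1 + x) ^ B` on `(-1, 1)`. -/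
noncomputable def jacobiWeight (A B x : ℝ) : ℝ := (1 - x) ^ A * (1 + x) ^ B

variable {A B l x : ℝ}

lemma jacobiWeight_pos (hx : x ∈ Ioo (-1) 1) : 0 < jacobiWeight A B x :=
  mul_pos (rpow_pos_of_pos (sub_pos.2 hx.2) A) (rpow_pos_of_pos (neg_lt_iff_pos_add'.1 hx.1) B)

lemma jacobiWeight_mul (hx : x ∈ Ioo (-1) 1) (A' B' : ℝ) :
    jacobiWeight A B x * jacobiWeight A' B' x = jacobiWeight (A + A') (B + B') x := by
  rw [jacobiWeight, jacobiWeight, jacobiWeight, rpow_add (sub_pos.2 hx.2),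
    rpow_add (neg_lt_iff_pos_add'.1 hx.1)]
  ring

lemma jacobiWeight_add_one (hx : x ∈ Ioo (-1) 1) :
    jacobiWeight (A + 1) (B + 1) x = (1 - x) * (1 + x) * jacobiWeight A B x := by
  rw [← jacobiWeight_mul hx, jacobiWeight, jacobiWeight, rpow_one, rpow_one, mul_comm]

lemma continuous_jacobiWeight (hA : 0 ≤ A) (hB : 0 ≤ B) : Continuous (jacobiWeight A B) :=
  ((continuous_const.sub continuous_id).rpow_const fun _ ↦ .inr hA).mul
    ((continuous_const.add continuous_id).rpow_const fun _ ↦ .inr hB)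

lemma measurable_jacobiWeight (A B : ℝ) : Measurable (jacobiWeight A B) := by
  unfold jacobiWeight
  fun_prop

lemma hasDerivAt_jacobiWeight_add_one (hx : x ∈ Ioo (-1) 1) (A B : ℝ) :
    HasDerivAt (jacobiWeight (A + 1) (B + 1))
      (((B + 1) * (1 - x) - (A + 1) * (1 + x)) * jacobiWeight A B x) x := by
  have h₁ : 0 < 1 - x := sub_pos.2 hx.2
  have h₂ : 0 < 1 + x := neg_lt_iff_pos_add'.1 hx.1
  have hsub := ((hasDerivAt_id x).const_sub 1).rpow_const (p := A + 1) (.inl h₁.ne')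
  have hadd := ((hasDerivAt_id x).const_add 1).rpow_const (p := B + 1) (.inl h₂.ne')
  refine (hsub.mul hadd).congr_deriv ?_
  simp only [id, add_sub_cancel_right, rpow_add_one h₁.ne', rpow_add_one h₂.ne', jacobiWeight]
  ring

lemma integral_rpow_mul_sub_rpow (hA : -1 < A) (hB : -1 < B) {c : ℝ} (hc : 0 < c) :
    ∫ y in 0..c, y ^ A * (c - y) ^ B =
      c ^ (A + B + 1) * ProbabilityTheory.beta (A + 1) (B + 1) := by
  have hA' : 0 < A + 1 := neg_lt_iff_pos_add.1 hA
  have hB' : 0 < B + 1 := neg_lt_iff_pos_add.1 hB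
  have hscaled := Complex.betaIntegral_scaled (A + 1 : ℝ) (B + 1 : ℝ) hc
  rw [Complex.betaIntegral_eq_Gamma_mul_div _ _ (by simpa) (by simpa), ← Complex.ofReal_add,
    Complex.Gamma_ofReal, Complex.Gamma_ofReal, Complex.Gamma_ofReal] at hscaled
  have hpow {y : ℝ} (hy : 0 ≤ y) (s : ℝ) : (y : ℂ) ^ (((s + 1 : ℝ) : ℂ) - 1) = (y ^ s : ℝ) := by
    rw [Complex.ofReal_cpow hy]
    simp
  apply Complex.ofReal_injective
  rw [← intervalIntegral.integral_ofReal, ProbabilityTheory.beta]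
  have hexp : A + 1 + (B + 1) = A + B + 1 + 1 := by ring
  rw [hexp, hpow hc.le] at hscaled
  push_cast at hscaled ⊢
  rw [hexp, ← hscaled]
  refine intervalIntegral.integral_congr fun y hy ↦ ?_
  rw [uIcc_of_le hc.le] at hy
  have := hpow hy.1 A
  have := hpow (sub_nonneg.2 hy.2) B
  push_cast at *
  simp only [*]

lemma integral_jacobiWeight (hA : -1 < A) (hB : -1 < B) :
    ∫ x in (-1)..1, jacobiWeight A B x =
      2 ^ (A + B + 1) * ProbabilityTheory.beta (A + 1) (B + 1) := by
  rw [← integral_rpow_mul_sub_rpow hA hB two_pos]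
  convert intervalIntegral.integral_comp_sub_left (fun y : ℝ ↦ y ^ A * (2 - y) ^ B) 1 using 3
  · rw [jacobiWeight]
    ring_nf
  · norm_num
  · norm_num

lemma intervalIntegrable_jacobiWeight (hA : -1 < A) (hB : -1 < B) :
    IntervalIntegrable (jacobiWeight A B) volume (-1) 1 := by
  refine intervalIntegral.intervalIntegrable_of_integral_ne_zero ?_
  rw [integral_jacobiWeight hA hB]
  have := ProbabilityTheory.beta_pos (neg_lt_iff_pos_add.1 hA) (neg_lt_iff_pos_add.1 hB)
  positivity

lemma intervalIntegrable_jacobiWeight_mul (hA : -1 < A) (hB : -1 < B) (hl : l ∈ Ico (-1) 1)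
    {f : ℝ → ℝ} (hf : ContinuousOn f (Icc l 1)) :
    IntervalIntegrable (fun x ↦ jacobiWeight A B x * f x) volume l 1 := by
  refine .mul_continuousOn ?_ (by rwa [uIcc_of_le hl.2.le])
  refine (intervalIntegrable_jacobiWeight hA hB).mono_set ?_
  rw [uIcc_of_le hl.2.le, uIcc_of_le (by norm_num)]
  exact Icc_subset_Icc_left hl.1

end JacobiWeight

section IntegrationByParts

variable {a b s l x : ℝ}

lemma hasDerivAt_jacobiWeight_mul_jacobiP (ha : -1 < a) (hb : -1 < b) (s : ℝ) (n : ℕ)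
    (hx : x ∈ Ioo (-1) 1) :
    HasDerivAt (fun x ↦ jacobiWeight (a - s + 1) (b - s + 1) x * jacobiP n (a + 1) (b + 1) x)
      (2 * jacobiWeight (a - s) (b - s) x *
        (s * x * jacobiP n (a + 1) (b + 1) x - (n + 1) * jacobiP (n + 1) a b x)) x := by
  refine ((hasDerivAt_jacobiWeight_add_one hx (a - s) (b - s)).mul
    (differentiable_jacobiP n (a + 1) (b + 1) x).hasDerivAt).congr_deriv ?_
  rw [jacobiWeight_add_one hx]
  linear_combination jacobiWeight (a - s) (b - s) x * jacobiP_raising ha hb n x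

lemma integral_jacobiWeight_mul_jacobiP_succ (hA : -1 < a - s) (hB : -1 < b - s) (ha : -1 < a)
    (hb : -1 < b) (hl : l ∈ Ico (-1) 1) {φ φ' : ℝ → ℝ} (hφ : ContinuousOn φ (Icc l 1))
    (hφ' : ∀ x ∈ Ioo l 1, HasDerivAt φ (φ' x) x)
    (hint : IntervalIntegrable (fun x ↦ jacobiWeight (a - s + 1) (b - s + 1) x * φ' x) volume l 1)
    (hbdry : jacobiWeight (a - s + 1) (b - s + 1) l * φ l = 0) (n : ℕ) :
    2 * (n + 1) * ∫ x in l..1, jacobiWeight (a - s) (b - s) x * (φ x * jacobiP (n + 1) a b x) =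
      (∫ x in l..1, jacobiWeight (a - s + 1) (b - s + 1) x * (φ' x * jacobiP n (a + 1) (b + 1) x)) +
      2 * s * ∫ x in l..1,
        jacobiWeight (a - s) (b - s) x * (x * φ x * jacobiP n (a + 1) (b + 1) x) := by
  have hP := continuous_jacobiP n (a + 1) (b + 1)
  have hint₁ := (intervalIntegrable_jacobiWeight_mul hA hB hl
    (hφ.mul (continuous_jacobiP (n + 1) a b).continuousOn)).const_mul (-(2 * (n + 1)))
  have hint₂ := (intervalIntegrable_jacobiWeight_mul hA hB hl
    ((continuousOn_id.mul hφ).mul hP.continuousOn)).const_mul (2 * s)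
  have hint₃ : IntervalIntegrable (fun x ↦ jacobiWeight (a - s + 1) (b - s + 1) x *
      (φ' x * jacobiP n (a + 1) (b + 1) x)) volume l 1 := by
    simpa only [mul_assoc] using hint.mul_continuousOn hP.continuousOn
  have hW := (continuous_jacobiWeight (A := a - s + 1) (B := b - s + 1)
    (by linarith) (by linarith)).continuousOn (s := Icc l 1)
  have hzero : jacobiWeight (a - s + 1) (b - s + 1) 1 = 0 := by
    simp [jacobiWeight, zero_rpow (show a - s + 1 ≠ 0 by linarith)]
  have hFTC := intervalIntegral.integral_eq_sub_of_hasDerivAt_of_le hl.2.le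
    ((hW.mul hP.continuousOn).mul hφ) (fun x hx ↦
      ((hasDerivAt_jacobiWeight_mul_jacobiP ha hb s n ⟨hl.1.trans_lt hx.1, hx.2⟩).mul
        (hφ' x hx)).congr_deriv ?_) ((hint₁.add hint₂).add hint₃)
  · rw [intervalIntegral.integral_add (hint₁.add hint₂) hint₃,
      intervalIntegral.integral_add hint₁ hint₂, intervalIntegral.integral_const_mul,
      intervalIntegral.integral_const_mul] at hFTC
    simp only [Pi.mul_apply, id, hzero] at hFTC
    rw [mul_right_comm _ _ (φ l), hbdry] at hFTC
    linarith
  · simp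
    ring

end IntegrationByParts

section Orthogonality

/-- The inner product of the Jacobi polynomials `P_m` and `P_n` with respect to their weight. -/
noncomputable def jacobiGram (m n : ℕ) (a b : ℝ) : ℝ :=
  ∫ x in (-1)..1, jacobiWeight a b x * (jacobiP m a b x * jacobiP n a b x)

variable {a b : ℝ}

lemma jacobiGram_comm (m n : ℕ) (a b : ℝ) : jacobiGram m n a b = jacobiGram n m a b := by
  simp only [jacobiGram, mul_comm (jacobiP m a b _)]

lemma jacobiGram_zero_zero (ha : -1 < a) (hb : -1 < b) :
    jacobiGram 0 0 a b = 2 ^ (a + b + 1) * ProbabilityTheory.beta (a + 1) (b + 1) := by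
  simpa [jacobiGram, jacobiP_zero ha hb] using integral_jacobiWeight ha hb

lemma jacobiGram_zero_succ (ha : -1 < a) (hb : -1 < b) (n : ℕ) :
    jacobiGram 0 (n + 1) a b = 0 := by
  have := integral_jacobiWeight_mul_jacobiP_succ (s := 0) (φ := fun _ ↦ 1) (φ' := fun _ ↦ 0)
    (l := -1) (by simpa) (by simpa) ha hb (by simp) continuousOn_const
    (fun x _ ↦ hasDerivAt_const x 1) (by simp)
    (by simp [jacobiWeight, zero_rpow (show b + 1 ≠ 0 by linarith)]) n
  simpa [jacobiGram, jacobiP_zero ha hb, n.cast_add_one_ne_zero (R := ℝ)] using this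

lemma jacobiGram_succ_succ (ha : -1 < a) (hb : -1 < b) (m n : ℕ) :
    4 * (n + 1) * jacobiGram (m + 1) (n + 1) a b =
      (m + a + b + 2) * jacobiGram m n (a + 1) (b + 1) := by
  have := integral_jacobiWeight_mul_jacobiP_succ (s := 0) (l := -1) (by simpa) (by simpa) ha hb
    (by simp) (continuous_jacobiP (m + 1) a b).continuousOn
    (fun x _ ↦ hasDerivAt_jacobiP_succ ha hb m x)
    (intervalIntegrable_jacobiWeight_mul (by linarith) (by linarith) (by simp)
      ((continuous_jacobiP m (a + 1) (b + 1)).const_mul _).continuousOn)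
    (by simp [jacobiWeight, zero_rpow (show b + 1 ≠ 0 by linarith)]) n
  simp only [sub_zero, mul_zero, zero_mul, add_zero, mul_assoc] at this
  simp only [mul_left_comm (jacobiWeight (a + 1) (b + 1) _) (((m : ℝ) + a + b + 2) / 2),
    intervalIntegral.integral_const_mul] at this
  simp only [jacobiGram]
  linear_combination 2 * this

lemma jacobiGram_eq_zero_of_lt {m n : ℕ} (hmn : m < n) (ha : -1 < a) (hb : -1 < b) :
    jacobiGram m n a b = 0 := by
  induction m generalizing n a b with
  | zero =>
    obtain ⟨n, rfl⟩ := Nat.exists_eq_add_one.2 hmn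
    exact jacobiGram_zero_succ ha hb n
  | succ m ih =>
    obtain ⟨n, rfl⟩ := Nat.exists_eq_add_one.2 (m.succ_pos.trans hmn)
    have := jacobiGram_succ_succ ha hb m n
    rw [ih (by omega) (by linarith) (by linarith), mul_zero] at this
    exact (mul_eq_zero.1 this).resolve_left (by positivity)

lemma jacobiGram_of_ne {m n : ℕ} (hmn : m ≠ n) (ha : -1 < a) (hb : -1 < b) :
    jacobiGram m n a b = 0 := by
  obtain h | h := hmn.lt_or_gt
  · exact jacobiGram_eq_zero_of_lt h ha hb
  · rw [jacobiGram_comm, jacobiGram_eq_zero_of_lt h ha hb]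

lemma jacobiGram_self_pos (n : ℕ) (ha : -1 < a) (hb : -1 < b) : 0 < jacobiGram n n a b := by
  induction n generalizing a b with
  | zero =>
    rw [jacobiGram_zero_zero ha hb]
    have := ProbabilityTheory.beta_pos (neg_lt_iff_pos_add.1 ha) (neg_lt_iff_pos_add.1 hb)
    positivity
  | succ n ih =>
    have hpos := mul_pos (show 0 < n + a + b + 2 by linarith [n.cast_nonneg (α := ℝ)])
      (ih (a := a + 1) (b := b + 1) (by linarith) (by linarith))
    rw [← jacobiGram_succ_succ ha hb] at hpos
    exact (pos_iff_pos_of_mul_pos hpos).1 (by positivity)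

lemma jacobiGram_self (n : ℕ) (ha : -1 < a) (hb : -1 < b) :
    (2 * n + a + b + 1) * n.factorial * Gamma (n + a + b + 2) * jacobiGram n n a b =
      (n + a + b + 1) * 2 ^ (a + b + 1) * Gamma (n + a + 1) * Gamma (n + b + 1) := by
  induction n generalizing a b with
  | zero =>
    have := (Gamma_pos_of_pos (show 0 < a + b + 2 by linarith)).ne'
    rw [jacobiGram_zero_zero ha hb, ProbabilityTheory.beta]
    ring_nf at this ⊢
    field_simp
  | succ n ih =>
    have hsucc := jacobiGram_succ_succ ha hb n n
    have hrec := ih (a := a + 1) (b := b + 1) (by linarith) (by linarith)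
    have hpos : 0 < n + a + b + 3 := by linarith [n.cast_nonneg (α := ℝ)]
    have hΓ := Gamma_add_one hpos.ne'
    have hpow : (2 : ℝ) ^ (a + b + 3) = 4 * 2 ^ (a + b + 1) := by
      rw [show a + b + 3 = a + b + 1 + 2 by ring, rpow_add two_pos]
      norm_num
      ring
    rw [show (n : ℝ) + (a + 1) + (b + 1) + 2 = n + a + b + 3 + 1 by ring,
      show a + 1 + (b + 1) + 1 = a + b + 3 by ring, hΓ, hpow] at hrec
    rw [Nat.factorial_succ]
    push_cast
    rw [show (n : ℝ) + 1 + a + b + 2 = n + a + b + 3 by ring,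
      show (n : ℝ) + 1 + a + 1 = n + (a + 1) + 1 by ring,
      show (n : ℝ) + 1 + b + 1 = n + (b + 1) + 1 by ring]
    refine mul_left_cancel₀ (mul_pos four_pos hpos).ne' ?_
    linear_combination (n + a + b + 2) * hrec + (2 * n + a + b + 3) * n.factorial *
      (n + a + b + 3) * Gamma (n + a + b + 3) * hsucc

end Orthogonality

section EndpointGrowth

open Filter Asymptotics
open scoped Nat

lemma prod_range_add_mul_Gamma {s : ℝ} (hs : 0 < s) (n : ℕ) :
    (∏ j ∈ Finset.range n, (s + j)) * Gamma s = Gamma (n + s) := by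
  induction n with
  | zero => simp
  | succ n ih =>
    have hne : (n : ℝ) + s ≠ 0 := by positivity
    rw [Finset.prod_range_succ, mul_right_comm, ih, Nat.cast_succ, add_right_comm,
      Gamma_add_one hne]
    ring

lemma natCast_add_const_isEquivalent (c : ℝ) :
    (fun n : ℕ ↦ (n : ℝ) + c) ~[atTop] fun n ↦ (n : ℝ) :=
  IsEquivalent.refl.add_const_of_norm_tendsto_atTop
    (tendsto_norm_atTop_atTop.comp tendsto_natCast_atTop_atTop)

lemma Gamma_natCast_add_isEquivalent {s : ℝ} (hs : 0 < s) :
    (fun n : ℕ ↦ Gamma (n + s)) ~[atTop] fun n ↦ (n : ℝ) ^ (s - 1) * n ! := by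
  have hΓ := (Gamma_pos_of_pos hs).ne'
  have hseq : GammaSeq s ~[atTop] fun _ ↦ Gamma s :=
    (isEquivalent_const_iff_tendsto hΓ).2 (GammaSeq_tendsto_Gamma s)
  have hshift : (fun n : ℕ ↦ Gamma (n + s)) =ᶠ[atTop]
      fun n : ℕ ↦ (n : ℝ) ^ s * n ! * Gamma s / GammaSeq s n / (n + s) := by
    filter_upwards [eventually_gt_atTop 0] with n hn
    have hprod := prod_range_add_mul_Gamma hs (n + 1)
    have hne : (n : ℝ) + s ≠ 0 := by positivity
    rw [Nat.cast_succ, add_right_comm, Gamma_add_one hne] at hprod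
    rw [GammaSeq]
    have : (n : ℝ) ^ s ≠ 0 := by positivity
    have : 0 < ∏ j ∈ Finset.range (n + 1), (s + j) := Finset.prod_pos fun j _ ↦ by positivity
    field_simp
    linarith
  refine (((IsEquivalent.refl.div hseq).div (natCast_add_const_isEquivalent s)).congr_left
    hshift.symm).congr_right ?_
  filter_upwards [eventually_gt_atTop 0] with n hn
  rw [rpow_sub_one (by positivity)]
  simp only [Pi.div_apply]
  field_simp

variable {a b : ℝ}

lemma jacobiP_one_sq_div_jacobiGram (ha : -1 < a) (hb : -1 < b) {n : ℕ} (hn : 0 < n) :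
    jacobiP n a b 1 ^ 2 / jacobiGram n n a b =
      1 / (Gamma (a + 1) ^ 2 * 2 ^ (a + b + 1)) *
        (Gamma (n + (a + 1)) * Gamma (n + (a + b + 2)) / (n ! * Gamma (n + (b + 1))) *
          (2 * (n + (a + b + 1) / 2) / (n + (a + b + 1)))) := by
  have hn' : (1 : ℝ) ≤ n := mod_cast hn
  have := Gamma_pos_of_pos (show 0 < a + 1 by linarith)
  have := Gamma_pos_of_pos (show 0 < n + (a + 1) by linarith)
  have := Gamma_pos_of_pos (show 0 < n + (b + 1) by linarith)
  have : 0 < n + (a + b + 1) := by linarith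
  have := jacobiGram_self_pos n ha hb
  have hself : (2 * n + (a + b + 1)) * n ! * Gamma (n + (a + b + 2)) * jacobiGram n n a b =
      (n + (a + b + 1)) * 2 ^ (a + b + 1) * Gamma (n + (a + 1)) * Gamma (n + (b + 1)) := by
    simpa only [add_assoc] using jacobiGram_self n ha hb
  rw [jacobiP_one_right n a hb, add_assoc (n : ℝ) a 1]
  field_simp
  linear_combination -hself

lemma jacobiP_one_sq_div_jacobiGram_isEquivalent (ha : -1 < a) (hb : -1 < b) :
    (fun n ↦ jacobiP n a b 1 ^ 2 / jacobiGram n n a b) ~[atTop]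
      fun n ↦ 2 / (Gamma (a + 1) ^ 2 * 2 ^ (a + b + 1)) * (n : ℝ) ^ (2 * a + 1) := by
  have hΓ (s : ℝ) (hs : 0 < s) := Gamma_natCast_add_isEquivalent hs
  have hlin := natCast_add_const_isEquivalent
  have hprod := (((hΓ (a + 1) (by linarith)).mul (hΓ (a + b + 2) (by linarith))).div
    ((IsEquivalent.refl (u := fun n : ℕ ↦ (n ! : ℝ))).mul (hΓ (b + 1) (by linarith)))).mul
    (((IsEquivalent.refl (u := fun _ ↦ (2 : ℝ))).mul (hlin ((a + b + 1) / 2))).div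
      (hlin (a + b + 1)))
  refine ((IsEquivalent.refl (u := fun _ ↦ 1 / (Gamma (a + 1) ^ 2 * 2 ^ (a + b + 1)))).mul
    hprod).congr_left ?_ |>.congr_right ?_
  · filter_upwards [eventually_gt_atTop 0] with n hn
    exact (jacobiP_one_sq_div_jacobiGram ha hb hn).symm
  · filter_upwards [eventually_gt_atTop 0] with n hn
    have hn' : (0 : ℝ) < n := mod_cast hn
    have hpow : (n : ℝ) ^ a * n ^ (a + b + 1) = n ^ (2 * a + 1) * n ^ b := by
      rw [← rpow_add hn', ← rpow_add hn']
      ring_nf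
    simp only [Pi.mul_apply, Pi.div_apply, add_sub_cancel_right,
      show a + b + 2 - 1 = a + b + 1 by ring]
    field_simp
    rw [hpow, mul_comm 2 a, mul_comm (_ ^ b)]

end EndpointGrowth

section Bessel

lemma summable_sq_inner_div_of_pairwise_orthogonal {ι E : Type*} [NormedAddCommGroup E]
    [InnerProductSpace ℝ E] {v : ι → E} (hv : Pairwise fun i j ↦ inner ℝ (v i) (v j) = 0)
    (hne : ∀ i, v i ≠ 0) (x : E) : Summable fun i ↦ inner ℝ (v i) x ^ 2 / inner ℝ (v i) (v i) := by
  have hnorm : Orthonormal ℝ fun i ↦ ‖v i‖⁻¹ • v i :=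
    ⟨fun i ↦ by simp [norm_smul, hne i],
      fun i j hij ↦ by simp [inner_smul_left, inner_smul_right, hv hij]⟩
  refine (hnorm.inner_products_summable x).congr fun i ↦ ?_
  rw [real_inner_smul_left, real_inner_self_eq_norm_sq, norm_mul, norm_inv, norm_norm, mul_pow,
    norm_eq_abs, sq_abs]
  ring

lemma summable_sq_integral_mul_div {ι Ω : Type*} [MeasurableSpace Ω] {μ : Measure Ω}
    {e : ι → Ω → ℝ} {u : Ω → ℝ} (he : ∀ i, MemLp (e i) 2 μ)
    (horth : Pairwise fun i j ↦ ∫ x, e i x * e j x ∂μ = 0)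
    (hne : ∀ i, ∫ x, e i x * e i x ∂μ ≠ 0) (hu : MemLp u 2 μ) :
    Summable fun i ↦ (∫ x, u x * e i x ∂μ) ^ 2 / ∫ x, e i x * e i x ∂μ := by
  have hinner {f g : Ω → ℝ} (hf : MemLp f 2 μ) (hg : MemLp g 2 μ) :
      inner ℝ hf.toLp hg.toLp = ∫ x, g x * f x ∂μ := by
    rw [L2.inner_def]
    refine integral_congr_ae ?_
    filter_upwards [hf.coeFn_toLp, hg.coeFn_toLp] with x hfx hgx
    rw [hfx, hgx, RCLike.inner_apply', conj_trivial, mul_comm]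
  refine (summable_sq_inner_div_of_pairwise_orthogonal (v := fun i ↦ (he i).toLp) ?_ ?_
    hu.toLp).congr fun i ↦ by simp only [hinner]
  · intro i j hij
    rw [hinner]
    exact horth hij.symm
  · intro i h0
    refine hne i ?_
    rw [← hinner (he i) (he i), h0, inner_zero_left]

variable {a b l : ℝ}

lemma integral_eq_setIntegral_Ioo (hl : l ∈ Ico (-1) 1) (f : ℝ → ℝ) :
    ∫ x in l..1, f x = ∫ x in Ioo l 1, f x := by
  rw [intervalIntegral.integral_of_le hl.2.le, integral_Ioc_eq_integral_Ioo]

lemma jacobiWeight_half_mul_mul {x : ℝ} (hx : x ∈ Ioo (-1) 1) (y z : ℝ) :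
    jacobiWeight (a / 2) (b / 2) x * y * (jacobiWeight (a / 2) (b / 2) x * z) =
      jacobiWeight a b x * (y * z) := by
  rw [mul_mul_mul_comm, jacobiWeight_mul hx, add_halves, add_halves]

lemma memLp_two_jacobiWeight_half_mul (hl : l ∈ Ico (-1) 1) {f : ℝ → ℝ}
    (hf : AEStronglyMeasurable f (volume.restrict (Ioo l 1)))
    (hint : IntervalIntegrable (fun x ↦ jacobiWeight a b x * (f x * f x)) volume l 1) :
    MemLp (fun x ↦ jacobiWeight (a / 2) (b / 2) x * f x) 2 (volume.restrict (Ioo l 1)) := by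
  refine (memLp_two_iff_integrable_sq
    ((measurable_jacobiWeight _ _).aestronglyMeasurable.mul hf)).2 ?_
  rw [intervalIntegrable_iff_integrableOn_Ioo_of_le hl.2.le] at hint
  refine hint.congr_fun (fun x hx ↦ ?_) measurableSet_Ioo
  rw [sq]
  exact (jacobiWeight_half_mul_mul ⟨hl.1.trans_lt hx.1, hx.2⟩ _ _).symm

lemma summable_sq_integral_jacobiWeight_mul_jacobiP_div (ha : -1 < a) (hb : -1 < b)
    (hl : l ∈ Ico (-1) 1) {f : ℝ → ℝ} (hf : AEStronglyMeasurable f (volume.restrict (Ioo l 1)))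
    (hint : IntervalIntegrable (fun x ↦ jacobiWeight a b x * (f x * f x)) volume l 1) :
    Summable fun n ↦ (∫ x in l..1, jacobiWeight a b x * (f x * jacobiP n a b x)) ^ 2 /
      jacobiGram n n a b := by
  have hneg : (-1 : ℝ) ∈ Ico (-1) 1 := by simp
  set e : ℕ → ℝ → ℝ := fun n x ↦ jacobiWeight (a / 2) (b / 2) x * jacobiP n a b x
  have hgram (m n : ℕ) : ∫ x in Ioo (-1) 1, e m x * e n x = jacobiGram m n a b := by
    rw [jacobiGram, integral_eq_setIntegral_Ioo hneg]
    exact setIntegral_congr_fun measurableSet_Ioo fun x hx ↦ jacobiWeight_half_mul_mul hx _ _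
  have he (n : ℕ) : MemLp (e n) 2 (volume.restrict (Ioo (-1) 1)) :=
    memLp_two_jacobiWeight_half_mul hneg (continuous_jacobiP n a b).aestronglyMeasurable
      (intervalIntegrable_jacobiWeight_mul ha hb hneg
        ((continuous_jacobiP n a b).mul (continuous_jacobiP n a b)).continuousOn)
  have hsub : Ioo l 1 ⊆ Ioo (-1) 1 := Ioo_subset_Ioo_left hl.1
  set u : ℝ → ℝ := (Ioo l 1).indicator fun x ↦ jacobiWeight (a / 2) (b / 2) x * f x
  have hu : MemLp u 2 (volume.restrict (Ioo (-1) 1)) := by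
    rw [memLp_indicator_iff_restrict measurableSet_Ioo, Measure.restrict_restrict_of_subset hsub]
    exact memLp_two_jacobiWeight_half_mul hl hf hint
  refine (summable_sq_integral_mul_div he (fun m n hmn ↦ (hgram m n).trans
    (jacobiGram_of_ne hmn ha hb)) (fun n ↦ (hgram n n).trans_ne (jacobiGram_self_pos n ha hb).ne')
    hu).congr fun n ↦ ?_
  rw [hgram, integral_eq_setIntegral_Ioo hl]
  congr 2
  simp only [u, ← indicator_mul_left]
  rw [setIntegral_indicator measurableSet_Ioo, inter_eq_right.2 hsub]
  exact setIntegral_congr_fun measurableSet_Ioo fun x hx ↦ jacobiWeight_half_mul_mul (hsub hx) _ _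

end Bessel

section ArccosPower

open Polynomial

/-- The power `(t - θ) ^ e` times a polynomial in `cos θ`, in the variable `x = cos θ`.
It represents the truncated power `(t - θ)₊ ^ e` on the interval `cos t ≤ x`. -/
noncomputable def arccosPow (t e : ℝ) (Q : ℝ[X]) (x : ℝ) : ℝ := (t - arccos x) ^ e * Q.eval x

/-- The unnormalised `n`-th Jacobi coefficient of `(t - θ)₊ ^ e * Q (cos θ) * (sin θ) ^ (-2 * s)`,
as an integral in the variable `x = cos θ`. -/
noncomputable def arccosPowCoeff (t e s : ℝ) (Q : ℝ[X]) (a b : ℝ) (n : ℕ) : ℝ :=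
  ∫ x in cos t..1, jacobiWeight (a - s) (b - s) x * (arccosPow t e Q x * jacobiP n a b x)

variable {t e s a b A B x : ℝ}

lemma cos_mem_Ico (ht : t ∈ Ioc 0 π) : cos t ∈ Ico (-1) 1 :=
  ⟨neg_one_le_cos t, cos_zero ▸ cos_lt_cos_of_nonneg_of_le_pi le_rfl ht.2 ht.1⟩

lemma continuous_arccosPow (t : ℝ) (he : 0 ≤ e) (Q : ℝ[X]) : Continuous (arccosPow t e Q) :=
  ((continuous_const.sub continuous_arccos).rpow_const fun _ ↦ .inr he).mul Q.continuous

lemma arccosPow_cos_self (ht : t ∈ Ioc 0 π) (he : e ≠ 0) (Q : ℝ[X]) :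
    arccosPow t e Q (cos t) = 0 := by
  rw [arccosPow, arccos_cos ht.1.le ht.2, sub_self, zero_rpow he, zero_mul]

lemma jacobiWeight_neg_half (hx : x ∈ Ioo (-1) 1) :
    jacobiWeight (-1 / 2) (-1 / 2) x = 1 / √(1 - x ^ 2) := by
  have h₁ : 0 ≤ 1 - x := sub_nonneg.2 hx.2.le
  have h₂ : 0 ≤ 1 + x := (neg_lt_iff_pos_add'.1 hx.1).le
  rw [jacobiWeight, ← mul_rpow h₁ h₂, neg_div, rpow_neg (mul_nonneg h₁ h₂), ← sqrt_eq_rpow, one_div]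
  ring_nf

lemma hasDerivAt_arccosPow (t : ℝ) (he : 1 ≤ e) (Q : ℝ[X]) (hx : x ∈ Ioo (-1) 1) :
    HasDerivAt (arccosPow t e Q)
      (e * (jacobiWeight (-1 / 2) (-1 / 2) x * arccosPow t (e - 1) Q x) +
        arccosPow t e (derivative Q) x) x := by
  have harccos := ((hasDerivAt_arccos hx.1.ne' hx.2.ne).const_sub t).rpow_const (p := e) (.inr he)
  refine (harccos.mul (Q.hasDerivAt x)).congr_deriv ?_
  rw [jacobiWeight_neg_half hx, arccosPow, arccosPow]
  ring

lemma jacobiWeight_mul_deriv_arccosPow (A B t e : ℝ) (Q : ℝ[X]) (hx : x ∈ Ioo (-1) 1) :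
    jacobiWeight (A + 1) (B + 1) x * (e * (jacobiWeight (-1 / 2) (-1 / 2) x *
        arccosPow t (e - 1) Q x) + arccosPow t e (derivative Q) x) =
      e * (jacobiWeight (A + 1 / 2) (B + 1 / 2) x * arccosPow t (e - 1) Q x) +
        jacobiWeight A B x * arccosPow t e ((1 - X ^ 2) * derivative Q) x := by
  have hhalf : jacobiWeight (A + 1) (B + 1) x * jacobiWeight (-1 / 2) (-1 / 2) x =
      jacobiWeight (A + 1 / 2) (B + 1 / 2) x := by
    rw [jacobiWeight_mul hx]
    ring_nf
  have heval : arccosPow t e ((1 - X ^ 2) * derivative Q) x =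
      (1 - x) * (1 + x) * arccosPow t e (derivative Q) x := by
    simp only [arccosPow, eval_mul, eval_sub, eval_one, eval_pow, eval_X]
    ring
  rw [heval, ← hhalf, jacobiWeight_add_one hx]
  ring

lemma intervalIntegrable_arccosPow (ht : t ∈ Ioc 0 π) (he : 0 ≤ e) (hA : -1 < A) (hB : -1 < B)
    (Q : ℝ[X]) (n : ℕ) (a b : ℝ) :
    IntervalIntegrable (fun x ↦ jacobiWeight A B x * (arccosPow t e Q x * jacobiP n a b x))
      volume (cos t) 1 :=
  intervalIntegrable_jacobiWeight_mul hA hB (cos_mem_Ico ht)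
    ((continuous_arccosPow t he Q).mul (continuous_jacobiP n a b)).continuousOn

lemma arccosPowCoeff_add (ht : t ∈ Ioc 0 π) (he : 0 ≤ e) (hA : -1 < a - s) (hB : -1 < b - s)
    (Q R : ℝ[X]) (n : ℕ) :
    arccosPowCoeff t e s (Q + R) a b n =
      arccosPowCoeff t e s Q a b n + arccosPowCoeff t e s R a b n := by
  rw [arccosPowCoeff, arccosPowCoeff, arccosPowCoeff, ← intervalIntegral.integral_add
    (intervalIntegrable_arccosPow ht he hA hB Q n a b)
    (intervalIntegrable_arccosPow ht he hA hB R n a b)]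
  simp only [arccosPow, eval_add, mul_add, add_mul]

lemma arccosPowCoeff_C_mul (t e s c : ℝ) (Q : ℝ[X]) (a b : ℝ) (n : ℕ) :
    arccosPowCoeff t e s (C c * Q) a b n = c * arccosPowCoeff t e s Q a b n := by
  rw [arccosPowCoeff, arccosPowCoeff, ← intervalIntegral.integral_const_mul]
  simp only [arccosPow, eval_mul, eval_C, mul_left_comm c, mul_assoc]

lemma arccosPowCoeff_X_mul (t e s : ℝ) (Q : ℝ[X]) (a b : ℝ) (n : ℕ) :
    arccosPowCoeff t e s (X * Q) a b n =
      ∫ x in cos t..1, jacobiWeight (a - s) (b - s) x *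
        (x * arccosPow t e Q x * jacobiP n a b x) := by
  simp only [arccosPowCoeff, arccosPow, eval_mul, eval_X, mul_left_comm]

lemma integral_jacobiWeight_mul_deriv_arccosPow (ht : t ∈ Ioc 0 π) (he : 1 ≤ e)
    (hA : -1 < a - s) (hB : -1 < b - s) (Q : ℝ[X]) (n : ℕ) :
    ∫ x in cos t..1, jacobiWeight (a - s + 1) (b - s + 1) x *
        ((e * (jacobiWeight (-1 / 2) (-1 / 2) x * arccosPow t (e - 1) Q x) +
          arccosPow t e (derivative Q) x) * jacobiP n (a + 1) (b + 1) x) =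
      e * arccosPowCoeff t (e - 1) (s + 1 / 2) Q (a + 1) (b + 1) n +
        arccosPowCoeff t e (s + 1) ((1 - X ^ 2) * derivative Q) (a + 1) (b + 1) n := by
  have hl := cos_mem_Ico ht
  have hhalf (c : ℝ) : c + 1 - (s + 1 / 2) = c - s + 1 / 2 := by ring
  rw [arccosPowCoeff, arccosPowCoeff, ← intervalIntegral.integral_const_mul,
    ← intervalIntegral.integral_add ((intervalIntegrable_arccosPow ht (by linarith)
      (by linarith) (by linarith) _ _ _ _).const_mul e)
      (intervalIntegrable_arccosPow ht (by linarith) (by linarith) (by linarith) _ _ _ _)]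
  refine intervalIntegral.integral_congr_Ioo_of_le hl.2.le fun x hx ↦ ?_
  have hx' : x ∈ Ioo (-1) 1 := ⟨hl.1.trans_lt hx.1, hx.2⟩
  rw [← mul_assoc, jacobiWeight_mul_deriv_arccosPow _ _ t e Q hx', hhalf, hhalf,
    add_sub_add_right_eq_sub, add_sub_add_right_eq_sub]
  ring

lemma arccosPowCoeff_succ (ht : t ∈ Ioc 0 π) (he : 1 ≤ e) (hA : -1 < a - s) (hB : -1 < b - s)
    (ha : -1 < a) (hb : -1 < b) (Q : ℝ[X]) (n : ℕ) :
    2 * ((n + 1) * arccosPowCoeff t e s Q a b (n + 1)) =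
      e * arccosPowCoeff t (e - 1) (s + 1 / 2) Q (a + 1) (b + 1) n +
        arccosPowCoeff t e (s + 1) ((1 - X ^ 2) * derivative Q + C (2 * s) * (X * Q))
          (a + 1) (b + 1) n := by
  have hl := cos_mem_Ico ht
  have hIoo {x : ℝ} (hx : x ∈ Ioo (cos t) 1) : x ∈ Ioo (-1) 1 := ⟨hl.1.trans_lt hx.1, hx.2⟩
  have he₀ : 0 ≤ e := by linarith
  have hcont {e : ℝ} (he : 0 ≤ e) (Q : ℝ[X]) : ContinuousOn (arccosPow t e Q) (Icc (cos t) 1) :=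
    (continuous_arccosPow t he Q).continuousOn
  have hint := ((intervalIntegrable_jacobiWeight_mul (A := a - s + 1 / 2) (B := b - s + 1 / 2)
    (by linarith) (by linarith) hl (hcont (sub_nonneg.2 he) Q)).const_mul e).add
    (intervalIntegrable_jacobiWeight_mul hA hB hl (hcont he₀ ((1 - X ^ 2) * derivative Q)))
  have hibp := integral_jacobiWeight_mul_jacobiP_succ hA hB ha hb hl (hcont he₀ Q)
    (fun x hx ↦ hasDerivAt_arccosPow t he Q (hIoo hx))
    (hint.congr_uIoo fun x hx ↦ (jacobiWeight_mul_deriv_arccosPow _ _ t e Q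
      (hIoo (by rwa [uIoo_of_le hl.2.le] at hx))).symm)
    (by rw [arccosPow_cos_self ht (by linarith), mul_zero]) n
  rw [arccosPowCoeff_add ht he₀ (by linarith) (by linarith), ← add_assoc,
    ← integral_jacobiWeight_mul_deriv_arccosPow ht he hA hB, arccosPowCoeff_C_mul,
    arccosPowCoeff_X_mul, add_sub_add_right_eq_sub, add_sub_add_right_eq_sub, ← hibp,
    arccosPowCoeff, mul_assoc]

end ArccosPower

section WeightedSquareSummable

variable {ι : Type*} {u v g : ι → ℝ}

lemma summable_sq_const_mul_add_div (hg : ∀ i, 0 ≤ g i)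
    (hu : Summable fun i ↦ u i ^ 2 / g i) (hv : Summable fun i ↦ v i ^ 2 / g i) (c : ℝ) :
    Summable fun i ↦ (c * u i + v i) ^ 2 / g i := by
  refine (((hu.mul_left (c ^ 2)).add hv).mul_left 2).of_nonneg_of_le
    (fun i ↦ div_nonneg (sq_nonneg _) (hg i)) fun i ↦ ?_
  rw [← mul_div_assoc, ← mul_pow, ← add_div, ← mul_div_assoc]
  exact div_le_div_of_nonneg_right add_sq_le (hg i)

lemma summable_mul_div_of_sq (hg : ∀ i, 0 ≤ g i)
    (hu : Summable fun i ↦ u i ^ 2 / g i) (hv : Summable fun i ↦ v i ^ 2 / g i) :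
    Summable fun i ↦ u i * v i / g i := by
  refine (hu.add hv).of_norm_bounded fun i ↦ ?_
  rw [← add_div, norm_div, norm_of_nonneg (hg i), norm_mul, norm_eq_abs, norm_eq_abs]
  refine div_le_div_of_nonneg_right ?_ (hg i)
  rw [← sq_abs (u i), ← sq_abs (v i)]
  linarith [two_mul_le_add_sq |u i| |v i|, mul_nonneg (abs_nonneg (u i)) (abs_nonneg (v i))]

end WeightedSquareSummable

section CoefficientDecay

open Polynomial

variable {t e s a b x : ℝ}

lemma arccos_le_of_cos_le (ht : t ∈ Ioc 0 π) (hx : cos t ≤ x) : arccos x ≤ t :=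
  (arccos_le_arccos hx).trans_eq (arccos_cos ht.1.le ht.2)

lemma sq_sub_arccos_le (ht : t ∈ Ioc 0 π) (hx : x ∈ Icc (cos t) 1) :
    (t - arccos x) ^ 2 ≤ π ^ 2 / 2 * (1 + x) := by
  have hle : arccos x ≤ t := arccos_le_of_cos_le ht hx.1
  have hcos := cos_le_one_sub_mul_cos_sq (x := arccos (-x))
    (by rw [abs_of_nonneg (arccos_nonneg _)]; exact arccos_le_pi _)
  rw [cos_arccos (by linarith [hx.2]) (by linarith [hx.1, neg_one_le_cos t]), arccos_neg] at hcos
  calc (t - arccos x) ^ 2 ≤ (π - arccos x) ^ 2 :=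
        pow_le_pow_left₀ (sub_nonneg.2 hle) (sub_le_sub_right ht.2 _) 2
    _ = π ^ 2 / 2 * (2 / π ^ 2 * (π - arccos x) ^ 2) := by field_simp
    _ ≤ π ^ 2 / 2 * (1 + x) := by gcongr; linarith

lemma arccosPow_sq_le (ht : t ∈ Ioc 0 π) (he : 0 ≤ e) (hx : x ∈ Icc (cos t) 1) (Q : ℝ[X]) :
    arccosPow t e Q x ^ 2 ≤ (π ^ 2 / 2) ^ e * ((1 + x) ^ e * Q.eval x ^ 2) := by
  have hle : 0 ≤ t - arccos x := sub_nonneg.2 (arccos_le_of_cos_le ht hx.1)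
  have hx₁ : 0 ≤ 1 + x := by linarith [hx.1, neg_one_le_cos t]
  rw [arccosPow, mul_pow, ← mul_assoc, ← mul_rpow (by positivity) hx₁, ← rpow_natCast,
    ← rpow_mul hle, mul_comm e, rpow_mul hle, rpow_natCast]
  gcongr
  exact sq_sub_arccos_le ht hx

lemma intervalIntegrable_jacobiWeight_mul_arccosPow_sq (ht : t ∈ Ioc 0 π) (he : 0 ≤ e) {A B : ℝ}
    (hA : -1 < A) (hB : -1 < B + e) (Q : ℝ[X]) :
    IntervalIntegrable (fun x ↦ jacobiWeight A B x * arccosPow t e Q x ^ 2) volume (cos t) 1 := by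
  have hl := cos_mem_Ico ht
  have hdom := (intervalIntegrable_jacobiWeight_mul hA hB hl
    (Q.continuous.pow 2).continuousOn).const_mul ((π ^ 2 / 2) ^ e)
  rw [intervalIntegrable_iff_integrableOn_Ioo_of_le hl.2.le] at hdom ⊢
  refine hdom.mono' ((measurable_jacobiWeight A B).mul
    ((continuous_arccosPow t he Q).measurable.pow_const 2)).aestronglyMeasurable ?_
  refine (ae_restrict_mem measurableSet_Ioo).mono fun x hx ↦ ?_
  have hx' : x ∈ Ioo (-1) 1 := ⟨hl.1.trans_lt hx.1, hx.2⟩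
  have hw : 0 ≤ jacobiWeight A B x := (jacobiWeight_pos hx').le
  rw [norm_of_nonneg (mul_nonneg hw (sq_nonneg _))]
  calc jacobiWeight A B x * arccosPow t e Q x ^ 2
      ≤ jacobiWeight A B x * ((π ^ 2 / 2) ^ e * ((1 + x) ^ e * Q.eval x ^ 2)) := by
        gcongr
        exact arccosPow_sq_le ht he (Ioo_subset_Icc_self hx) Q
    _ = (π ^ 2 / 2) ^ e * (jacobiWeight A (B + e) x * Q.eval x ^ 2) := by
        rw [jacobiWeight, jacobiWeight, rpow_add (neg_lt_iff_pos_add'.1 hx'.1)]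
        ring

lemma summable_sq_arccosPowCoeff_div (ht : t ∈ Ioc 0 π) (he : 0 ≤ e) (ha : -1 < a) (hb : -1 < b)
    (hA : -1 < a - 2 * s) (hB : -1 < b - 2 * s + e) (Q : ℝ[X]) :
    Summable fun n ↦ arccosPowCoeff t e s Q a b n ^ 2 / jacobiGram n n a b := by
  have hl := cos_mem_Ico ht
  have hIoo {x : ℝ} (hx : x ∈ Ioo (cos t) 1) : x ∈ Ioo (-1) 1 := ⟨hl.1.trans_lt hx.1, hx.2⟩
  have hbessel := summable_sq_integral_jacobiWeight_mul_jacobiP_div ha hb hl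
    (f := fun x ↦ jacobiWeight (-s) (-s) x * arccosPow t e Q x)
    ((measurable_jacobiWeight _ _).mul
      (continuous_arccosPow t he Q).measurable).aestronglyMeasurable
    ((intervalIntegrable_jacobiWeight_mul_arccosPow_sq ht he hA hB Q).congr_uIoo fun x hx ↦ by
      rw [uIoo_of_le hl.2.le] at hx
      rw [mul_mul_mul_comm, jacobiWeight_mul (hIoo hx), ← mul_assoc, jacobiWeight_mul (hIoo hx)]
      ring_nf)
  refine hbessel.congr fun n ↦ ?_
  congr 2
  refine intervalIntegral.integral_congr_Ioo_of_le hl.2.le fun x hx ↦ ?_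
  rw [← mul_assoc, ← mul_assoc, jacobiWeight_mul (hIoo hx), mul_assoc, sub_eq_add_neg,
    sub_eq_add_neg]

lemma inv_jacobiGram_succ_le (ha : -1 < a) (hb : -1 < b) (n : ℕ) :
    (jacobiGram (n + 1) (n + 1) a b)⁻¹ ≤
      4 * (1 + (a + b + 2)⁻¹) * (jacobiGram n n (a + 1) (b + 1))⁻¹ := by
  have hrec := jacobiGram_succ_succ ha hb n n
  have hpos := jacobiGram_self_pos (n + 1) ha hb
  have hpos' := jacobiGram_self_pos n (show -1 < a + 1 by linarith) (show -1 < b + 1 by linarith)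
  have hab : 0 < a + b + 2 := by linarith
  have hlin : (n + 1 : ℝ) ≤ (1 + (a + b + 2)⁻¹) * (n + a + b + 2) := by
    have : (1 + (a + b + 2)⁻¹) * (n + a + b + 2) =
        n + 1 + (a + b + 2) + (a + b + 2)⁻¹ * n := by
      field_simp
      ring
    rw [this]
    have : 0 ≤ (a + b + 2)⁻¹ * n := by positivity
    linarith
  rw [inv_le_iff_one_le_mul₀ hpos, mul_right_comm, ← div_eq_mul_inv, one_le_div hpos']
  refine le_of_mul_le_mul_left ?_ (show (0 : ℝ) < n + 1 by positivity)
  calc (n + 1) * jacobiGram n n (a + 1) (b + 1)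
      ≤ (1 + (a + b + 2)⁻¹) * (n + a + b + 2) * jacobiGram n n (a + 1) (b + 1) := by gcongr
    _ = (n + 1) * (4 * (1 + (a + b + 2)⁻¹) * jacobiGram (n + 1) (n + 1) a b) := by
      linear_combination -(1 + (a + b + 2)⁻¹) * hrec

lemma summable_sq_pow_mul_div_jacobiGram_of_succ (ha : -1 < a) (hb : -1 < b) {r : ℕ} {c : ℕ → ℝ}
    (h : Summable fun n : ℕ ↦ ((n + 1) ^ r * c (n + 1)) ^ 2 / jacobiGram n n (a + 1) (b + 1)) :
    Summable fun n : ℕ ↦ ((n + 1) ^ r * c n) ^ 2 / jacobiGram n n a b := by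
  rw [← summable_nat_add_iff 1]
  refine (h.mul_left ((2 ^ r) ^ 2 * (4 * (1 + (a + b + 2)⁻¹)))).of_nonneg_of_le
    (fun n ↦ div_nonneg (sq_nonneg _) (jacobiGram_self_pos _ ha hb).le) fun n ↦ ?_
  push_cast
  have hpow : ((n : ℝ) + 1 + 1) ^ r ≤ 2 ^ r * (n + 1) ^ r := by
    rw [← mul_pow]
    gcongr
    linarith [n.cast_nonneg (α := ℝ)]
  calc (((n : ℝ) + 1 + 1) ^ r * c (n + 1)) ^ 2 / jacobiGram (n + 1) (n + 1) a b
      ≤ (2 ^ r * (n + 1) ^ r) ^ 2 * c (n + 1) ^ 2 *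
          (4 * (1 + (a + b + 2)⁻¹) * (jacobiGram n n (a + 1) (b + 1))⁻¹) := by
        rw [mul_pow, div_eq_mul_inv]
        have := inv_nonneg.2 (jacobiGram_self_pos (n + 1) ha hb).le
        gcongr
        exact inv_jacobiGram_succ_le ha hb n
    _ = _ := by ring

lemma summable_sq_pow_mul_arccosPowCoeff_div (ht : t ∈ Ioc 0 π) {r : ℕ} (hr : r ≤ e) (ha : -1 < a)
    (hb : -1 < b) (hb' : -1 < b - s) (hA : -1 < a - 2 * s - r) (hB : -1 < b - 2 * s + e - r)
    (Q : ℝ[X]) :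
    Summable fun n : ℕ ↦ ((n + 1) ^ r * arccosPowCoeff t e s Q a b n) ^ 2 / jacobiGram n n a b := by
  induction r generalizing e s a b Q with
  | zero =>
    simp only [Nat.cast_zero, sub_zero] at hr hA hB
    simpa using summable_sq_arccosPowCoeff_div ht hr ha hb hA hB Q
  | succ r ih =>
    push_cast at hr hA hB
    have : (0 : ℝ) ≤ r := r.cast_nonneg
    have ha₁ : -1 < a + 1 := by linarith
    have hb₁ : -1 < b + 1 := by linarith
    have hderiv := ih (e := e - 1) (s := s + 1 / 2) (by linarith) ha₁ hb₁ (by linarith)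
      (by linarith) (by linarith) Q
    have hpoly := ih (e := e) (s := s + 1) (by linarith) ha₁ hb₁ (by linarith) (by linarith)
      (by linarith) ((1 - X ^ 2) * derivative Q + C (2 * s) * (X * Q))
    have hsum := summable_sq_const_mul_add_div (fun n ↦ (jacobiGram_self_pos n ha₁ hb₁).le)
      hderiv hpoly e
    refine summable_sq_pow_mul_div_jacobiGram_of_succ ha hb ((hsum.mul_left (1 / 4)).congr ?_)
    intro n
    have hrec := arccosPowCoeff_succ ht (by linarith) (by linarith) hb' ha hb Q n
    rw [mul_left_comm e, ← mul_add, ← hrec]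
    ring

end CoefficientDecay

section FourierJacobi

open Polynomial Filter Asymptotics

variable {α β δ t a b : ℝ}

/-- Here the second term of `arccosPowCoeff_succ` vanishes, which makes room for one more
integration by parts than `summable_sq_pow_mul_arccosPowCoeff_div` allows. -/
lemma summable_sq_pow_mul_arccosPowCoeff_zero_one_div (ht : t ∈ Ioc 0 π) {r : ℕ} (hrδ : r + 1 ≤ δ)
    (ha : -1 < a) (hb : -1 < b) (hr : r < a + 1) :
    Summable fun n : ℕ ↦
      ((n + 1) ^ (r + 1) * arccosPowCoeff t δ 0 1 a b n) ^ 2 / jacobiGram n n a b := by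
  have hsum := summable_sq_pow_mul_arccosPowCoeff_div (e := δ - 1) (s := 1 / 2) (a := a + 1)
    (b := b + 1) ht (r := r) (by linarith) (by linarith) (by linarith) (by linarith)
    (by linarith) (by linarith) 1
  refine summable_sq_pow_mul_div_jacobiGram_of_succ ha hb
    ((hsum.mul_left (δ ^ 2 / 4)).congr fun n ↦ ?_)
  have hrec := arccosPowCoeff_succ (s := 0) ht (by linarith : (1 : ℝ) ≤ δ) (by simpa) (by simpa)
    ha hb 1 n
  rw [derivative_one, mul_zero, mul_zero, zero_add ((C _ : ℝ[X]) * _), zero_add (_ / _),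
    arccosPowCoeff_C_mul, zero_mul, add_zero] at hrec
  rw [pow_succ (_ + 1 : ℝ), mul_assoc, eq_div_of_mul_eq two_ne_zero ((mul_comm _ _).trans hrec)]
  ring

lemma integral_comp_cos_mul_sin (ht : t ∈ Ioc 0 π) (g : ℝ → ℝ) :
    ∫ θ in 0..t, g (cos θ) * sin θ = ∫ x in cos t..1, g x := by
  have hsub := intervalIntegral.integral_comp_mul_deriv_of_deriv_nonpos (a := 0) (b := t)
    (g := g) continuous_cos.continuousOn (fun θ _ ↦ hasDerivAt_cos θ) fun θ hθ ↦ ?_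
  · simpa [intervalIntegral.integral_symm (cos t)] using hsub
  · rw [min_eq_left ht.1.le, max_eq_right ht.1.le] at hθ
    exact neg_nonpos.2 (sin_pos_of_pos_of_lt_pi hθ.1 (hθ.2.trans_le ht.2)).le

lemma jacobiWeight_cos_mul_sin {θ : ℝ} (hθ : θ ∈ Ioo 0 π) (α β : ℝ) :
    jacobiWeight (α - 1 / 2) (β - 1 / 2) (cos θ) * sin θ =
      2 ^ (α + β) * (sin (θ / 2) ^ (2 * α) * cos (θ / 2) ^ (2 * β)) := by
  obtain ⟨hθ₀, hθπ⟩ := hθ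
  have hs : 0 < sin (θ / 2) := sin_pos_of_pos_of_lt_pi (by linarith) (by linarith)
  have hc : 0 < cos (θ / 2) := cos_pos_of_mem_Ioo ⟨by linarith, by linarith⟩
  have hcos : cos θ = 2 * cos (θ / 2) ^ 2 - 1 := by
    rw [← cos_two_mul, mul_div_cancel₀ _ two_ne_zero]
  have hsin : sin θ = 2 * sin (θ / 2) * cos (θ / 2) := by
    rw [← sin_two_mul, mul_div_cancel₀ _ two_ne_zero]
  have hsub : 1 - cos θ = 2 * sin (θ / 2) ^ 2 := by rw [hcos, cos_sq']; ring
  have hadd : 1 + cos θ = 2 * cos (θ / 2) ^ 2 := by rw [hcos]; ring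
  have hpow {y : ℝ} (hy : 0 < y) (γ : ℝ) :
      (2 * y ^ 2) ^ (γ - 1 / 2) = 2 ^ γ / √2 * (y ^ (2 * γ) / y) := by
    rw [mul_rpow two_pos.le (sq_nonneg y), rpow_sub two_pos, ← sqrt_eq_rpow, ← rpow_natCast,
      ← rpow_mul hy.le, Nat.cast_ofNat, mul_sub, mul_one_div_cancel two_ne_zero,
      rpow_sub_one hy.ne']
  rw [jacobiWeight, hsub, hadd, hsin, hpow hs, hpow hc, rpow_add two_pos]
  field_simp
  rw [sq_sqrt two_pos.le]

lemma FJ_eq_arccosPowCoeff (ht : t ∈ Ioc 0 π) (α β δ : ℝ) (n : ℕ) :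
    2 ^ (α + β) * FJ n α β δ t = arccosPowCoeff t δ 0 1 (α - 1 / 2) (β - 1 / 2) n := by
  rw [arccosPowCoeff, ← integral_comp_cos_mul_sin ht, FJ, ← intervalIntegral.integral_const_mul]
  refine intervalIntegral.integral_congr_Ioo_of_le ht.1.le fun θ hθ ↦ ?_
  have hθ' : θ ∈ Ioo 0 π := ⟨hθ.1, hθ.2.trans_le ht.2⟩
  rw [arccosPow, arccos_cos hθ'.1.le hθ'.2.le, eval_one, mul_one, sub_zero, sub_zero]
  linear_combination -(t - θ) ^ δ * jacobiP n (α - 1 / 2) (β - 1 / 2) (cos θ) *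
    jacobiWeight_cos_mul_sin hθ' α β

lemma hJ_eq_jacobiGram (n : ℕ) (α β : ℝ) :
    2 ^ (α + β) * hJ n α β = 2 * jacobiGram n n (α - 1 / 2) (β - 1 / 2) := by
  rw [hJ, ← mul_assoc, ← rpow_add two_pos, show α + β + (-α - β + 1) = 1 by ring, rpow_one,
    jacobiGram]
  congr 2 with x
  rw [jacobiWeight]
  ring

lemma FJ_div_hJ (ht : t ∈ Ioc 0 π) (α β δ : ℝ) (n : ℕ) :
    FJ n α β δ t / hJ n α β = arccosPowCoeff t δ 0 1 (α - 1 / 2) (β - 1 / 2) n /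
      (2 * jacobiGram n n (α - 1 / 2) (β - 1 / 2)) := by
  rw [← FJ_eq_arccosPowCoeff ht, ← hJ_eq_jacobiGram, mul_div_mul_left]
  positivity

lemma summable_sq_jacobiP_one_div (ha : -1 < a) (hb : -1 < b) {r : ℕ} (hr : a + 1 < r) :
    Summable fun n : ℕ ↦ (jacobiP n a b 1 / (n + 1) ^ r) ^ 2 / jacobiGram n n a b := by
  have hO : (fun n : ℕ ↦ (jacobiP n a b 1 / (n + 1) ^ r) ^ 2 / jacobiGram n n a b) =O[atTop]
      fun n : ℕ ↦ (n : ℝ) ^ (2 * a + 1 - 2 * r) := by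
    calc (fun n : ℕ ↦ (jacobiP n a b 1 / (n + 1) ^ r) ^ 2 / jacobiGram n n a b)
        = fun n : ℕ ↦ jacobiP n a b 1 ^ 2 / jacobiGram n n a b * (((n : ℝ) + 1) ^ (2 * r))⁻¹ := by
          ext n
          ring
      _ =O[atTop] fun n : ℕ ↦ (n : ℝ) ^ (2 * a + 1) * ((n : ℝ) ^ (2 * r))⁻¹ := by
          refine .mul ((jacobiP_one_sq_div_jacobiGram_isEquivalent ha hb).isBigO.trans
            (isBigO_const_mul_self _ _ _)) ?_
          exact ((natCast_add_const_isEquivalent 1).pow (2 * r)).inv.isBigO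
      _ =ᶠ[atTop] fun n : ℕ ↦ (n : ℝ) ^ (2 * a + 1 - 2 * r) := by
          filter_upwards [eventually_gt_atTop 0] with n hn
          have : (0 : ℝ) < n := by exact_mod_cast hn
          rw [rpow_sub this, div_eq_mul_inv]
          norm_cast
  exact summable_of_isBigO_nat (summable_nat_rpow.2 (by linarith)) hO

theorem fourierJacobi_converges_at_zero_general (hα : -1 / 2 < α) (hβ : -1 / 2 < β) {r : ℕ}
    (hαr : α + 1 / 2 < r) (hrα : r < α + 3 / 2) (hrδ : r ≤ δ) (ht : t ∈ Ioc 0 π) :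
    Summable fun n ↦ FJ n α β δ t / hJ n α β * jacobiP n (α - 1 / 2) (β - 1 / 2) 1 := by
  have ha : -1 < α - 1 / 2 := by linarith
  have hb : -1 < β - 1 / 2 := by linarith
  have hr : (0 : ℝ) < r := by linarith
  obtain ⟨r, rfl⟩ : ∃ k, r = k + 1 := Nat.exists_eq_add_one.2 (by exact_mod_cast hr)
  push_cast at hαr hrα hrδ
  have hcoeff := summable_sq_pow_mul_arccosPowCoeff_zero_one_div ht hrδ ha hb (by linarith)
  have hvalue := summable_sq_jacobiP_one_div ha hb (r := r + 1) (by push_cast; linarith)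
  refine ((summable_mul_div_of_sq (fun n ↦ (jacobiGram_self_pos n ha hb).le) hcoeff
    hvalue).mul_left (1 / 2)).congr fun n ↦ ?_
  rw [FJ_div_hJ ht, mul_comm (_ ^ _), mul_assoc (arccosPowCoeff _ _ _ _ _ _ _),
    mul_div_cancel₀ _ (by positivity)]
  ring

end FourierJacobi

theorem fourierJacobi_converges_at_zero (α β : ℕ) (hαβ : 0 < max α β) (δ : ℝ)
    (hδ : (α : ℝ) + 1 ≤ δ) (t : ℝ) (ht : t ∈ Set.Ioc (0:ℝ) π) :
    ∃ L : ℝ, Filter.Tendsto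
      (fun N => ∑ n ∈ Finset.range N,
        FJ n (α : ℝ) (β : ℝ) δ t / hJ n (α : ℝ) (β : ℝ) *
          jacobiP n ((α : ℝ) - 1/2) ((β : ℝ) - 1/2) 1)
      Filter.atTop (nhds L) := by
  have : (0 : ℝ) ≤ α := α.cast_nonneg
  have : (0 : ℝ) ≤ β := β.cast_nonneg
  exact ⟨_, (fourierJacobi_converges_at_zero_general (r := α + 1) (by linarith) (by linarith)
    (by push_cast; linarith) (by push_cast; linarith) (by exact_mod_cast hδ)
    ht).hasSum.tendsto_sum_nat⟩
end
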